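/- arXiv:2211.09465 — 2 statements merged into one kernel-verified Lean document; each statement's English description precedes it below -/
import Mathlib

section
/- Let p be a prime and let S ⊆ F_p^2 be a set of seven distinct points no five of which are collinear. Then S imposes independent conditions on cubic curves; that is, the F_p-vector space of polynomials in F_p[X,Y] of total degree at most 3 vanishing at every point of S has dimension exactly 3 (codimension 7 in the 10-dimensional space of all polynomials of total degree at most 3). -/
/-!
The argument works for any set `S` of at most `2d + 1` points of an affine space, no `d + 2` of them
collinear, and polynomials of degree at most `d`; here `d = 3`. By rank-nullity it is enough to
find, for each `q ∈ S`, such a polynomial that vanishes on `S \ {q}` but not at `q`.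

A line through `q` contains at most `d` of the at most `2d` other points. Sort these points by the
line joining them to `q`, and pair those whose positions are congruent modulo `d`. The two points of
a pair are seen from `q` along different lines, since otherwise the `d + 1` points between them,
both included, would all lie on one line through `q`. Hence the line through the pair misses `q`, so
some affine function vanishes on the pair but not at `q`. The product of these `d` affine functions
is the required polynomial.
-/

open scoped Classical

noncomputable section

def zeroSet {p : ℕ} (f : MvPolynomial (Fin 2) (ZMod p)) : Set (Fin 2 → ZMod p) :=
  {x | MvPolynomial.eval x f = 0}

/-- The space of polynomials of total degree at most 3 vanishing at every point of `S`. -/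
def vanishingCubics (p : ℕ) (S : Finset (Fin 2 → ZMod p)) :
    Submodule (ZMod p) (MvPolynomial (Fin 2) (ZMod p)) :=
  MvPolynomial.restrictTotalDegree (Fin 2) (ZMod p) 3 ⊓
    ⨅ q ∈ S, LinearMap.ker (MvPolynomial.aeval (R := ZMod p) q).toLinearMap

/-- A finite set of points is collinear if all its points lie on the zero set of a
polynomial of total degree 1. -/
def CollinearPts {p : ℕ} (T : Finset (Fin 2 → ZMod p)) : Prop :=
  ∃ f : MvPolynomial (Fin 2) (ZMod p), f.totalDegree = 1 ∧ ∀ q ∈ T, q ∈ zeroSet f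

open MvPolynomial AffineSubspace
open scoped Finset

section Combinatorics

variable {α β : Type*}

lemma exists_enumeration_ordConnected_fibers (s : Finset α) (f : α → β) :
    ∃ e : Fin #s → α, Function.Injective e ∧ Finset.univ.image e = s ∧
      ∀ ⦃i j k⦄, i ≤ j → j ≤ k → f (e i) = f (e k) → f (e j) = f (e k) := by
  let _ : LinearOrder β := linearOrderOfSTO WellOrderingRel
  let g : Fin #s → α := fun i => s.equivFin.symm i
  refine ⟨g ∘ Tuple.sort (f ∘ g), ?_, ?_, fun i j k hij hjk hik => ?_⟩
  · exact (Subtype.val_injective.comp s.equivFin.symm.injective).comp (Equiv.injective _)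
  · ext a
    simp only [Finset.mem_image, Finset.mem_univ, true_and]
    refine ⟨?_, fun ha => ⟨(Tuple.sort (f ∘ g)).symm (s.equivFin ⟨a, ha⟩), by simp [g]⟩⟩
    rintro ⟨i, rfl⟩
    exact (s.equivFin.symm _).2
  · have hmono : Monotone (f ∘ g ∘ Tuple.sort (f ∘ g)) := Tuple.monotone_sort (f ∘ g)
    exact le_antisymm (hmono hjk) (hik.ge.trans (hmono hij))

lemma card_filter_fin_mod_eq_le {n d k : ℕ} (hn : n ≤ d * k) (i : ℕ) :
    #{j : Fin n | j % d = i} ≤ k := by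
  rw [← Finset.card_range k]
  refine Finset.card_le_card_of_injOn (fun j => j / d) (fun j _ => ?_) fun j hj l hl hdiv => ?_
  · exact Finset.mem_coe.mpr (Finset.mem_range.mpr (Nat.div_lt_of_lt_mul (j.2.trans_le hn)))
  · have hmod : (j : ℕ) % d = l % d :=
      (Finset.mem_filter.mp hj).2.trans (Finset.mem_filter.mp hl).2.symm
    exact Fin.ext <| calc (j : ℕ)
      _ = d * (j / d) + j % d := (Nat.div_add_mod _ _).symm
      _ = d * (l / d) + l % d := by rw [hmod, show (j : ℕ) / d = l / d from hdiv]
      _ = l := Nat.div_add_mod _ _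

lemma injOn_mod_eq_of_ordConnected_fibers {n d : ℕ} {g : Fin n → β}
    (hconn : ∀ ⦃i j k⦄, i ≤ j → j ≤ k → g i = g k → g j = g k)
    (hcard : ∀ k, #{j | g j = g k} ≤ d) (i : ℕ) : Set.InjOn g {j | (j : ℕ) % d = i} := by
  have hclose : ∀ j l, j ≤ l → g j = g l → (l : ℕ) < j + d := fun j l hjl hg => by
    have hsub : Finset.Icc j l ⊆ ({m | g m = g l} : Finset (Fin n)) := fun m hm =>
      Finset.mem_filter.mpr
        ⟨Finset.mem_univ m, hconn (Finset.mem_Icc.mp hm).1 (Finset.mem_Icc.mp hm).2 hg⟩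
    have hle := (Finset.card_le_card hsub).trans (hcard l)
    rw [Fin.card_Icc] at hle
    omega
  intro j hj l hl hg
  refine Fin.ext (Nat.ModEq.eq_of_abs_lt (hj.trans hl.symm) ?_)
  rw [abs_lt]
  obtain hjl | hlj := le_total j l
  · have := hclose j l hjl hg
    omega
  · have := hclose l j hlj hg.symm
    omega

theorem exists_biUnion_eq_injOn_card_le {s : Finset α} {f : α → β} {d k : ℕ} (hs : #s ≤ d * k)
    (hf : ∀ a ∈ s, #{b ∈ s | f b = f a} ≤ d) :
    ∃ P : Fin d → Finset α, Finset.univ.biUnion P = s ∧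
      ∀ i, #(P i) ≤ k ∧ Set.InjOn f (P i) := by
  obtain ⟨e, he, hes, hconn⟩ := exists_enumeration_ordConnected_fibers s f
  have hmem : ∀ j, e j ∈ s := fun j => hes ▸ Finset.mem_image_of_mem e (Finset.mem_univ j)
  have hcard : ∀ l, #{j | f (e j) = f (e l)} ≤ d := fun l =>
    (Finset.card_le_card_of_injOn e (fun j hj => by simpa [hmem j] using hj) he.injOn).trans
      (hf (e l) (hmem l))
  refine ⟨fun i => Finset.image e {j | (j : ℕ) % d = i}, ?_, fun i => ⟨?_, ?_⟩⟩
  · refine (Finset.biUnion_subset.mpr fun i _ => ?_).antisymm fun a ha => ?_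
    · exact (Finset.image_subset_image (Finset.subset_univ _)).trans hes.subset
    · obtain ⟨j, -, rfl⟩ := Finset.mem_image.mp (hes ▸ ha)
      have hd : 0 < d := pos_of_mul_pos_left (j.pos.trans_le hs) k.zero_le
      exact Finset.mem_biUnion.mpr ⟨⟨j % d, Nat.mod_lt j hd⟩, Finset.mem_univ _,
        Finset.mem_image_of_mem e (by simp)⟩
  · exact Finset.card_image_le.trans (card_filter_fin_mod_eq_le hs i)
  · rw [Finset.coe_image, Finset.coe_filter_univ]
    exact (injOn_mod_eq_of_ordConnected_fibers hconn hcard i).image_of_comp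

end Combinatorics

section Affine

variable {K V P : Type*} [DivisionRing K] [AddCommGroup V] [Module K V] [AddTorsor V P]

lemma collinear_coe_affineSpan {s : Set P} :
    Collinear K (affineSpan K s : Set P) ↔ Collinear K s := by
  rw [Collinear, ← direction_affineSpan, affineSpan_coe, direction_affineSpan, Collinear]

lemma card_filter_line_eq_le {S : Finset P} {d : ℕ}
    (hcol : ∀ T ⊆ S, #T = d + 2 → ¬ Collinear K (T : Set P)) {q : P} (hq : q ∈ S) (r : P) :
    #{x ∈ S.erase q | line[K, q, x] = line[K, q, r]} ≤ d := by
  by_contra! hlt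
  obtain ⟨T, hT, hTcard⟩ := Finset.exists_subset_card_eq (Nat.succ_le_of_lt hlt)
  have hqT : q ∉ T := fun h => by simpa using hT h
  refine hcol (insert q T) ?_ (by rw [Finset.card_insert_of_notMem hqT, hTcard]) ?_
  · exact Finset.insert_subset hq fun x hx =>
      Finset.mem_of_mem_erase (Finset.mem_filter.mp (hT hx)).1
  · refine (collinear_coe_affineSpan.mpr (collinear_pair K q r)).subset fun x hx => ?_
    obtain rfl | hx := Finset.mem_insert.mp (Finset.mem_coe.mp hx)
    · exact left_mem_affineSpan_pair K x r
    · rw [← (Finset.mem_filter.mp (hT hx)).2]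
      exact right_mem_affineSpan_pair K q x

lemma notMem_affineSpan_pair_of_line_ne {q r s : P} (hr : r ≠ q) (hs : s ≠ q)
    (hrs : line[K, q, r] ≠ line[K, q, s]) : q ∉ line[K, r, s] := fun hq =>
  hrs <| (affineSpan_pair_eq_of_mem_of_mem_of_ne hq (left_mem_affineSpan_pair K r s) hr.symm).trans
    (affineSpan_pair_eq_of_left_mem_of_ne hq hs.symm).symm

lemma notMem_affineSpan_of_injOn_line {q : P} {T : Finset P} (hqT : q ∉ T) (hT : #T ≤ 2)
    (hinj : Set.InjOn (fun r => line[K, q, r]) T) : q ∉ affineSpan K (T : Set P) := by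
  have hne : ∀ r ∈ T, r ≠ q := fun r hr => ne_of_mem_of_not_mem hr hqT
  interval_cases hcard : #T
  · simpa [Finset.card_eq_zero.mp hcard] using notMem_bot K V q
  · obtain ⟨r, rfl⟩ := Finset.card_eq_one.mp hcard
    simpa using hqT
  · obtain ⟨r, s, hrs, rfl⟩ := Finset.card_eq_two.mp hcard
    rw [Finset.coe_pair] at hinj ⊢
    exact notMem_affineSpan_pair_of_line_ne (hne r (by simp)) (hne s (by simp))
      (hinj.ne (by simp) (by simp) hrs)

lemma exists_notMem_affineSpan_of_collinear (hV : 1 < Module.finrank K V) {s : Set P}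
    (hs : Collinear K s) : ∃ q, q ∉ affineSpan K s := by
  by_contra! h
  have htop : vectorSpan K s = ⊤ := by
    rw [← direction_affineSpan, (eq_top_iff (a := affineSpan K s)).mpr fun q _ => h q,
      direction_top]
  have := hs.finiteDimensional_vectorSpan
  have hle := hs.finrank_le_one
  rw [htop, finrank_top] at hle
  exact hV.not_ge hle

lemma exists_affineMap_eq_zero_of_notMem {A : AffineSubspace K P} {q : P} (hq : q ∉ A) :
    ∃ g : P →ᵃ[K] K, g q ≠ 0 ∧ ∀ x ∈ A, g x = 0 := by
  obtain rfl | ⟨r, hr⟩ := A.eq_bot_or_nonempty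
  · exact ⟨AffineMap.const K P 1, one_ne_zero, fun x hx => absurd hx (notMem_bot K V x)⟩
  · obtain ⟨φ, hφq, hφ⟩ := Submodule.exists_le_ker_of_notMem
      (mt (vsub_right_mem_direction_iff_mem hr q).mp hq)
    refine ⟨φ.toAffineMap.comp (AffineEquiv.vaddConst K r).symm.toAffineMap, hφq, fun x hx => ?_⟩
    exact hφ (vsub_mem_direction hx hr)

end Affine

section Polynomial

lemma totalDegree_eq_one_of_eval_ne {R σ : Type*} [CommSemiring R] {f : MvPolynomial σ R}
    (hf : f.totalDegree ≤ 1) {x y : σ → R} (h : eval x f ≠ eval y f) : f.totalDegree = 1 := by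
  refine le_antisymm hf (Nat.one_le_iff_ne_zero.mpr fun h0 => h ?_)
  rw [totalDegree_eq_zero_iff_eq_C.mp h0, eval_C, eval_C]

/-- Homogenisation of exponent vectors: the slack `d - ∑ i, n i` becomes the exponent of an
additional variable `none`. -/
def exponentEquivOption (σ : Type*) [Fintype σ] (d : ℕ) :
    {n : σ →₀ ℕ | (n.sum fun _ e => e) ≤ d} ≃ {n : Option σ → ℕ // ∑ i, n i = d} where
  toFun n := ⟨fun i => i.elim (d - ∑ i, n.1 i) n.1, by
    have hn : ∑ i, n.1 i ≤ d := by simpa [Finsupp.sum_fintype] using n.2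
    simpa [Fintype.sum_option] using Nat.sub_add_cancel hn⟩
  invFun n := ⟨Finsupp.equivFunOnFinite.symm fun i => n.1 (some i), by
    have hn : n.1 none + ∑ i, n.1 (some i) = d := by simpa [Fintype.sum_option] using n.2
    simpa [Finsupp.sum_fintype] using Nat.le_of_add_left_le hn.le⟩
  left_inv n := by ext i; rfl
  right_inv n := by
    have hn : n.1 none + ∑ i, n.1 (some i) = d := by simpa [Fintype.sum_option] using n.2
    ext (_ | i)
    · exact (Nat.eq_sub_of_add_eq hn).symm
    · rfl

lemma finrank_restrictTotalDegree (R σ : Type*) [CommSemiring R] [Nontrivial R] [Fintype σ]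
    (d : ℕ) :
    Module.finrank R (restrictTotalDegree σ R d) = (Fintype.card σ + d).choose d := calc
  _ = Nat.card {n : σ →₀ ℕ | (n.sum fun _ e => e) ≤ d} :=
    Module.finrank_eq_nat_card_basis (basisRestrictSupport R _)
  _ = Nat.card (Sym (Option σ) d) :=
    Nat.card_congr ((exponentEquivOption σ d).trans (Sym.equivNatSumOfFintype _ _).symm)
  _ = (Fintype.card σ + d).choose d := by
    rw [Nat.card_eq_fintype_card, Sym.card_sym_eq_choose, Fintype.card_option]
    congr 1
    omega

lemma exists_eval_eq_affineMap {R σ : Type*} [CommRing R] [Finite σ] (g : (σ → R) →ᵃ[R] R) :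
    ∃ f : MvPolynomial σ R, f.totalDegree ≤ 1 ∧ ∀ x, eval x f = g x := by
  have := Fintype.ofFinite σ
  let l := g.linear.toMvPolynomial (Pi.basisFun R σ) (Module.Basis.singleton Unit R) ()
  refine ⟨l + C (g 0), ?_, fun x => ?_⟩
  · refine (totalDegree_add _ _).trans (max_le (LinearMap.toMvPolynomial_totalDegree_le _ _ _ _) ?_)
    simp
  · have hl : eval x l = g.linear x := by
      have hx : (Pi.basisFun R σ).repr.symm (Finsupp.equivFunOnFinite.symm x) = x := by
        rw [LinearEquiv.symm_apply_eq]
        ext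
        simp
      refine (LinearMap.toMvPolynomial_eval_eq_apply _ _ _ _
        (Finsupp.equivFunOnFinite.symm x)).trans ?_
      rw [hx, Module.Basis.singleton_repr]
    rw [map_add, hl, eval_C, g.decomp, Pi.add_apply]
    simp

lemma exists_totalDegree_le_card_eval_ne_zero {K σ ι : Type*} [Field K] [Finite σ] [Fintype ι]
    {A : ι → AffineSubspace K (σ → K)} {q : σ → K} (hq : ∀ i, q ∉ A i) :
    ∃ f : MvPolynomial σ K, f.totalDegree ≤ Fintype.card ι ∧ eval q f ≠ 0 ∧
      ∀ i, ∀ x ∈ A i, eval x f = 0 := by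
  choose g hgq hg using fun i => exists_affineMap_eq_zero_of_notMem (hq i)
  choose f hdeg hf using fun i => exists_eval_eq_affineMap (g i)
  refine ⟨∏ i, f i, ?_, ?_, fun i x hx => ?_⟩
  · calc (∏ i, f i).totalDegree
      _ ≤ ∑ i, (f i).totalDegree := totalDegree_finsetProd _ _
      _ ≤ ∑ _i : ι, 1 := Finset.sum_le_sum fun i _ => hdeg i
      _ = Fintype.card ι := by simp
  · rw [map_prod, Finset.prod_ne_zero_iff]
    exact fun i _ => (hf i q).trans_ne (hgq i)
  · rw [map_prod]
    exact Finset.prod_eq_zero (Finset.mem_univ i) ((hf i x).trans (hg i x hx))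

end Polynomial

section IndependentConditions

variable {R σ : Type*} [CommSemiring R]

/-- The space of polynomials of total degree at most `d` vanishing at every point of `S`. -/
def vanishingOfDegreeLE (d : ℕ) (S : Finset (σ → R)) : Submodule R (MvPolynomial σ R) :=
  restrictTotalDegree σ R d ⊓ ⨅ q ∈ S, LinearMap.ker (aeval (R := R) q).toLinearMap

/-- Evaluation at the points of `S` of polynomials of total degree at most `d`; the points impose
independent conditions on such polynomials when this map is surjective. -/
def evalOn (d : ℕ) (S : Finset (σ → R)) : restrictTotalDegree σ R d →ₗ[R] S → R :=
  LinearMap.pi fun q => (aeval (R := R) (q : σ → R)).toLinearMap.domRestrict _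

lemma evalOn_apply (d : ℕ) (S : Finset (σ → R)) (f : restrictTotalDegree σ R d) (q : S) :
    evalOn d S f q = eval (q : σ → R) (f : MvPolynomial σ R) := by
  simp [evalOn, aeval_eq_eval]

lemma map_subtype_ker_evalOn (d : ℕ) (S : Finset (σ → R)) :
    (LinearMap.ker (evalOn d S)).map (Submodule.subtype _) = vanishingOfDegreeLE d S := by
  ext f
  simp [vanishingOfDegreeLE, funext_iff, evalOn_apply, aeval_eq_eval, and_comm]

variable {K : Type*} [Field K]

lemma finrank_vanishingOfDegreeLE_add_card [Fintype σ] {d : ℕ} {S : Finset (σ → K)}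
    (hS : Function.Surjective (evalOn d S)) :
    Module.finrank K (vanishingOfDegreeLE d S) + #S = (Fintype.card σ + d).choose d := by
  rw [← map_subtype_ker_evalOn, Submodule.finrank_map_subtype_eq, ← finrank_restrictTotalDegree K,
    ← (evalOn d S).finrank_range_add_finrank_ker, LinearMap.range_eq_top.mpr hS, finrank_top,
    Module.finrank_pi, Fintype.card_coe, add_comm]

lemma evalOn_surjective_of_separating {d : ℕ} {S : Finset (σ → K)}
    (hS : ∀ q ∈ S, ∃ f : MvPolynomial σ K, f.totalDegree ≤ d ∧ eval q f ≠ 0 ∧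
      ∀ r ∈ S.erase q, eval r f = 0) :
    Function.Surjective (evalOn d S) := by
  rw [← LinearMap.range_eq_top, eq_top_iff, ← (Pi.basisFun K S).span_eq, Submodule.span_le]
  rintro _ ⟨q, rfl⟩
  obtain ⟨f, hdeg, hfq, hf⟩ := hS q q.2
  let F : restrictTotalDegree σ K d := ⟨f, (mem_restrictTotalDegree _ _ _).mpr hdeg⟩
  refine ⟨(eval q.1 f)⁻¹ • F, funext fun r => ?_⟩
  rw [map_smul, Pi.smul_apply, evalOn_apply, Pi.basisFun_apply, smul_eq_mul]
  obtain rfl | hrq := eq_or_ne r q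
  · rw [Pi.single_eq_same, inv_mul_cancel₀ hfq]
  · rw [hf r (Finset.mem_erase.mpr ⟨Subtype.coe_ne_coe.mpr hrq, r.2⟩), mul_zero,
      Pi.single_eq_of_ne hrq]

lemma exists_separating_of_not_collinear [Finite σ] {d : ℕ} {S : Finset (σ → K)}
    (hS : #S ≤ 2 * d + 1) (hcol : ∀ T ⊆ S, #T = d + 2 → ¬ Collinear K (T : Set (σ → K)))
    {q : σ → K} (hq : q ∈ S) :
    ∃ f : MvPolynomial σ K, f.totalDegree ≤ d ∧ eval q f ≠ 0 ∧ ∀ r ∈ S.erase q, eval r f = 0 := by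
  have hcard : #(S.erase q) ≤ d * 2 := by
    rw [Finset.card_erase_of_mem hq]
    omega
  obtain ⟨P, hP, hPi⟩ := exists_biUnion_eq_injOn_card_le (f := fun r => line[K, q, r]) hcard
    fun r _ => card_filter_line_eq_le hcol hq r
  have hqP : ∀ i, q ∉ P i := fun i hqi => Finset.notMem_erase q S <|
    hP ▸ Finset.mem_biUnion.mpr ⟨i, Finset.mem_univ i, hqi⟩
  obtain ⟨f, hdeg, hfq, hf⟩ := exists_totalDegree_le_card_eval_ne_zero fun i =>
    notMem_affineSpan_of_injOn_line (hqP i) (hPi i).1 (hPi i).2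
  refine ⟨f, by simpa using hdeg, hfq, fun r hr => ?_⟩
  obtain ⟨i, -, hri⟩ := Finset.mem_biUnion.mp (hP ▸ hr)
  exact hf i r (subset_affineSpan K _ hri)

end IndependentConditions

lemma collinearPts_of_collinear {p : ℕ} [Fact p.Prime] {T : Finset (Fin 2 → ZMod p)}
    (hne : T.Nonempty) (hT : Collinear (ZMod p) (T : Set (Fin 2 → ZMod p))) : CollinearPts T := by
  obtain ⟨q, hq⟩ := exists_notMem_affineSpan_of_collinear (by simp) hT
  obtain ⟨g, hgq, hg⟩ := exists_affineMap_eq_zero_of_notMem hq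
  obtain ⟨f, hdeg, hf⟩ := exists_eval_eq_affineMap g
  have hfT : ∀ r ∈ T, eval r f = 0 := fun r hr => (hf r).trans (hg r (subset_affineSpan _ _ hr))
  obtain ⟨r, hr⟩ := hne
  refine ⟨f, totalDegree_eq_one_of_eval_ne hdeg (x := q) (y := r) ?_, hfT⟩
  rw [hfT r hr, hf q]
  exact hgq

theorem seven_points_independent_conditions_general {K σ : Type*} [Field K] [Fintype σ] (d : ℕ)
    (S : Finset (σ → K)) (hS : #S ≤ 2 * d + 1)
    (hcol : ∀ T ⊆ S, #T = d + 2 → ¬ Collinear K (T : Set (σ → K))) :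
    Module.finrank K (vanishingOfDegreeLE d S) + #S = (Fintype.card σ + d).choose d :=
  finrank_vanishingOfDegreeLE_add_card <| evalOn_surjective_of_separating fun _ hq =>
    exists_separating_of_not_collinear hS hcol hq

theorem seven_points_independent_conditions
    (p : ℕ) [Fact p.Prime] (S : Finset (Fin 2 → ZMod p)) (hS : S.card = 7)
    (hcol : ∀ T ⊆ S, T.card = 5 → ¬ CollinearPts T) :
    Module.finrank (ZMod p) (vanishingCubics p S) = 3 := by
  have h := seven_points_independent_conditions_general 3 S hS.le fun T hTS hT =>
    mt (collinearPts_of_collinear (Finset.card_pos.mp (by omega))) (hcol T hTS hT)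
  exact Nat.add_right_cancel (h.trans (by simp [hS, Nat.choose]))
end
end

section
/- There is an absolute constant c > 0 such that the following holds for every prime p. Let L be a finite set of lines in F_p^2 with |L| ≤ p^{15/13}, and for an integer t ≥ 2 let P_t denote the set of points of F_p^2 that lie on at least t lines of L. Then |P_t| ≤ c·( |L|^{11/4}/t^{15/4} + |L|/t ). -/
/-!
Let `P` be a set of `m` points on at least `t` of the `n` lines of `L`, and keep exactly `t` lines
through each of them. Unless `m ≲ n / t`, averaging over pairs of points gives `q₁, q₂ ∈ P` such
that `≳ t⁴ m / n²` points of `P` lie on one of the `t` lines of `q₁` and on another one of the `t`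
lines of `q₂`. A projective map sending `q₁` and `q₂` to infinity places these points in a `t × t`
grid, where they are still `(t - 1)`-rich. So `t¹⁵ m⁴ ≲ n¹¹` follows once `g⁴ ≲ t n³` is proved for
the number `g` of rich points in such a grid.

By Cauchy–Schwarz along the rows of the grid, it suffices to count pairs of rich points `(a', b)`,
`(a, b)` with a line `b = m a' + c` through the first and a line `b = m' a + c'` through the second.
Each pair is an incidence between the S-line `x = a, z = c + m y` and the T-line
`y = a', z = c' + m' x` in three-space, and there are at most `t n` lines of each kind. A twist of
both families over `F(λ)` that respects incidence makes the `x` of an S-line and the `y` of a T-line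
determine the line.

The polynomial method bounds these incidences by `O((t n)^(3/2))` up to a lower order term. A
quarter of the S-lines is put on a surface `f = 0` of low degree. An irreducible component of it
either is not ruled by S-lines, and then Bezout's theorem applied to `f` and a flecnode polynomial
controls the incidences, or is ruled by S-lines. If such a ruled component contains more than a few
T-lines, it is a quadric `z = A x y + B x + C y + D`, where a T-line has at most `t` marked
incidences. Derivatives of `f` behave as in characteristic zero because the degrees, of order
`(t n)^(1/2) ≲ n^(3/4)`, are below the characteristic; this is where the bound on `|L|` enters.
-/

open scoped Classical

noncomputable section

/-- A set `l ⊆ F_p^2` is a line if it is the zero set of a polynomial of total degree 1. -/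
def IsLine {p : ℕ} (l : Set (Fin 2 → ZMod p)) : Prop :=
  ∃ f : MvPolynomial (Fin 2) (ZMod p), f.totalDegree = 1 ∧ l = zeroSet f

namespace RichPoints
open MvPolynomial
open scoped Nat Polynomial

/-! ### Derivatives of polynomials -/

theorem derivation_aeval {R A σ : Type*} [CommSemiring R] [CommSemiring A] [Algebra R A] [Fintype σ]
    (D : Derivation R A A) (g : σ → A) (f : MvPolynomial σ R) :
    D (aeval g f) = ∑ i, aeval g (pderiv i f) * D (g i) := by
  induction f using MvPolynomial.induction_on with
  | C a => simp
  | add f₁ f₂ h₁ h₂ => simp [h₁, h₂, add_mul, Finset.sum_add_distrib]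
  | mul_X f j h =>
    simp only [map_mul, aeval_X, Derivation.leibniz, h, smul_eq_mul, map_add, pderiv_X, add_mul,
      Finset.sum_add_distrib, Finset.mul_sum]
    congr 1
    · rw [Finset.sum_eq_single j] <;> simp +contextual [Ne.symm]
    · exact Finset.sum_congr rfl fun i _ => by ring

theorem pderiv_comm {R σ : Type*} [CommSemiring R] (i j : σ) (f : MvPolynomial σ R) :
    pderiv i (pderiv j f) = pderiv j (pderiv i f) := by
  ext m
  by_cases h : i = j
  · rw [h]
  · simp only [coeff_pderiv, Finsupp.add_apply, Finsupp.single_eq_of_ne h,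
      Finsupp.single_eq_of_ne (Ne.symm h), add_zero]
    rw [add_right_comm m, mul_right_comm]

theorem totalDegree_pderiv_le {R σ : Type*} [CommSemiring R] (i : σ) (f : MvPolynomial σ R) :
    (pderiv i f).totalDegree ≤ f.totalDegree - 1 := by
  refine Finset.sup_le fun m hm => ?_
  rw [mem_support_iff, coeff_pderiv] at hm
  have h := le_totalDegree (mem_support_iff.2 (left_ne_zero_of_mul hm))
  rw [Finsupp.sum_add_index' (by simp) (by simp), Finsupp.sum_single_index rfl] at h
  omega

theorem natCast_ne_zero_of_factorial {R : Type*} [Semiring R] {d j : ℕ} (hd : (d ! : R) ≠ 0)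
    (hj : 0 < j) (hjd : j ≤ d) : (j : R) ≠ 0 := by
  obtain ⟨k, hk⟩ := Nat.dvd_factorial hj hjd
  rw [hk, Nat.cast_mul] at hd
  exact left_ne_zero_of_mul hd

theorem factorial_ne_zero_of_le {R : Type*} [Semiring R] {d e : ℕ} (hd : (d ! : R) ≠ 0)
    (hed : e ≤ d) : (e ! : R) ≠ 0 := by
  obtain ⟨k, hk⟩ := Nat.factorial_dvd_factorial hed
  rw [hk, Nat.cast_mul] at hd
  exact left_ne_zero_of_mul hd

theorem pderiv_ne_zero {R σ : Type*} [CommSemiring R] [NoZeroDivisors R] {i : σ}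
    {f : MvPolynomial σ R} (hi : 0 < f.degreeOf i) (hd : ((f.degreeOf i)! : R) ≠ 0) :
    pderiv i f ≠ 0 := by
  obtain ⟨m, hm, hmi⟩ : ∃ m ∈ f.support, m i = f.degreeOf i := by
    rw [degreeOf_eq_sup] at hi ⊢
    have hne : f.support.Nonempty := by
      by_contra h
      simp [Finset.not_nonempty_iff_eq_empty.1 h] at hi
    obtain ⟨m, hm, h⟩ := Finset.exists_mem_eq_sup f.support hne (· i)
    exact ⟨m, hm, h.symm⟩
  intro h0
  have hcoeff := congrArg (coeff (m - Finsupp.single i 1)) h0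
  rw [coeff_pderiv, coeff_zero, tsub_add_cancel_of_le (Finsupp.single_le_iff.2 (by omega)),
    ← Nat.cast_add_one] at hcoeff
  have hexp : (m - Finsupp.single i 1 : σ →₀ ℕ) i + 1 = f.degreeOf i := by simp; omega
  rw [hexp] at hcoeff
  exact mul_ne_zero (mem_support_iff.1 hm) (natCast_ne_zero_of_factorial hd hi le_rfl) hcoeff

theorem natDegree_eq_zero_of_dvd_derivative {R : Type*} [CommRing R] [IsDomain R] {h : R[X]}
    (hd : (h.natDegree ! : R) ≠ 0) (hdvd : h ∣ Polynomial.derivative h) : h.natDegree = 0 := by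
  by_contra hpos
  have h' : Polynomial.derivative h = 0 :=
    Polynomial.eq_zero_of_dvd_of_natDegree_lt hdvd (Polynomial.natDegree_derivative_lt hpos)
  have hlead := Polynomial.coeff_derivative h (h.natDegree - 1)
  rw [h', Polynomial.coeff_zero, Nat.sub_add_cancel (Nat.pos_of_ne_zero hpos), ← Nat.cast_add_one,
    Nat.sub_add_cancel (Nat.pos_of_ne_zero hpos)] at hlead
  refine mul_ne_zero ?_ (natCast_ne_zero_of_factorial hd (Nat.pos_of_ne_zero hpos) le_rfl)
    hlead.symm
  exact Polynomial.leadingCoeff_ne_zero.2 (by rintro rfl; simp at hpos)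

theorem eq_zero_of_sq_mul_derivative_derivative_eq {R : Type*} [CommRing R] [IsDomain R]
    {h b u v : R[X]} {c : R} (hd : (h.natDegree ! : R) ≠ 0) (hb : ¬ b.IsRoot c)
    (h0 : h.IsRoot c) (h1 : (Polynomial.derivative h).IsRoot c)
    (heq : b ^ 2 * Polynomial.derivative (Polynomial.derivative h) =
      h * u + Polynomial.derivative h * v) : h = 0 := by
  by_contra hne
  set m := h.rootMultiplicity c
  have hm2 : 1 < m := (Polynomial.one_lt_rootMultiplicity_iff_isRoot hne).2 ⟨h0, h1⟩
  have hh : (Polynomial.X - Polynomial.C c) ^ m ∣ h := Polynomial.pow_rootMultiplicity_dvd h c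
  have hh'' : (Polynomial.X - Polynomial.C c) ^ (m - 1) ∣
      Polynomial.derivative (Polynomial.derivative h) := by
    refine (Polynomial.prime_X_sub_C c).pow_dvd_of_dvd_mul_left (m - 1) (fun hcb => hb ?_)
      (heq ▸ dvd_add ?_ ?_)
    · exact Polynomial.dvd_iff_isRoot.1 ((Polynomial.prime_X_sub_C c).dvd_of_dvd_pow hcb)
    · exact dvd_mul_of_dvd_left ((pow_dvd_pow _ (Nat.sub_le m 1)).trans hh) _
    · exact dvd_mul_of_dvd_left (Polynomial.pow_sub_one_dvd_derivative_of_pow_dvd hh) _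
  refine lt_irrefl m <|
    (Polynomial.lt_rootMultiplicity_iff_isRoot_iterate_derivative_of_mem_nonZeroDivisors hne
      (mem_nonZeroDivisors_of_ne_zero (factorial_ne_zero_of_le hd ?_))).2 fun j hj => ?_
  · simpa using Polynomial.natDegree_le_of_dvd hh hne
  · rcases hj.lt_or_eq with hj | rfl
    · exact Polynomial.isRoot_iterate_derivative_of_lt_rootMultiplicity hj
    · obtain ⟨k, hk⟩ : ∃ k, m = k + 2 := ⟨m - 2, by omega⟩
      rw [hk, Function.iterate_add_apply]
      have := Polynomial.pow_sub_dvd_iterate_derivative_of_pow_dvd k hh''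
      exact Polynomial.dvd_iff_isRoot.1 ((dvd_pow_self _ (by omega)).trans this)

/-! ### Elimination -/

theorem finSuccEquiv_rename_succ {R : Type*} [CommSemiring R] {n : ℕ} (r : MvPolynomial (Fin n) R) :
    finSuccEquiv R n (rename Fin.succ r) = Polynomial.C r := by
  induction r using MvPolynomial.induction_on with
  | C a => simp [finSuccEquiv_apply]
  | add r₁ r₂ h₁ h₂ => simp [h₁, h₂]
  | mul_X r i h => rw [map_mul, map_mul, h, rename_X, finSuccEquiv_X_succ, Polynomial.C_mul]

theorem totalDegree_resultant_le {R σ : Type*} [CommRing R] {F G : (MvPolynomial σ R)[X]}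
    {d e : ℕ} (hF : ∀ i, (F.coeff i).totalDegree ≤ d) (hG : ∀ i, (G.coeff i).totalDegree ≤ e)
    (m n : ℕ) : (F.resultant G m n).totalDegree ≤ m * e + n * d := by
  rw [Polynomial.resultant, Matrix.det_apply]
  refine totalDegree_finsetSum_le fun σ _ => (totalDegree_smul_le _ _).trans <|
    (totalDegree_finsetProd _ _).trans ?_
  rw [Fin.sum_univ_add]
  refine add_le_add ((Finset.sum_le_card_nsmul _ _ e fun j _ => ?_).trans (by simp))
    ((Finset.sum_le_card_nsmul _ _ d fun j _ => ?_).trans (by simp))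
  · simp only [Polynomial.sylvester, Matrix.of_apply, Fin.addCases_left]
    split_ifs <;> simp [hG]
  · simp only [Polynomial.sylvester, Matrix.of_apply, Fin.addCases_right]
    split_ifs <;> simp [hF]

/-- By Gauss's lemma `F` stays irreducible over the fraction field, so it is coprime there to `G`.
-/
theorem resultant_ne_zero_of_not_dvd {R : Type*} [CommRing R] [IsDomain R]
    [UniqueFactorizationMonoid R] {F G : R[X]} (hF : Irreducible F) (hpos : 0 < F.natDegree)
    (hFG : ¬ F ∣ G) : F.resultant G ≠ 0 := by
  let := UniqueFactorizationMonoid.toGCDMonoid R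
  set toFrac := algebraMap R (FractionRing R)
  have hφ : Function.Injective toFrac := IsFractionRing.injective R (FractionRing R)
  have hprim : F.IsPrimitive := hF.isPrimitive hpos.ne'
  have hcop : IsCoprime (F.map toFrac) (G.map toFrac) :=
    (hprim.irreducible_iff_irreducible_map_fraction_map.1 hF).coprime_iff_not_dvd.2
      fun h => hFG (hprim.dvd_of_fraction_map_dvd_fraction_map h)
  intro h0
  have hres : (F.map toFrac).resultant (G.map toFrac) = 0 := by
    rw [Polynomial.natDegree_map_eq_of_injective hφ, Polynomial.natDegree_map_eq_of_injective hφ,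
      Polynomial.resultant_map_map, h0, map_zero]
  exact (Polynomial.resultant_eq_zero_iff.1 hres).2 hcop

theorem totalDegree_coeff_finSuccEquiv_le {R : Type*} [CommSemiring R] {n : ℕ}
    (f : MvPolynomial (Fin (n + 1)) R) (i : ℕ) :
    ((finSuccEquiv R n f).coeff i).totalDegree ≤ f.totalDegree := by
  by_cases h : (finSuccEquiv R n f).coeff i = 0
  · simp [h]
  · exact (Nat.le_add_right _ i).trans (totalDegree_coeff_finSuccEquiv_add_le f i h)

theorem exists_rename_succ_eq_of_not_dvd {R : Type*} [CommRing R] [IsDomain R]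
    [UniqueFactorizationMonoid R] {n : ℕ} {f g : MvPolynomial (Fin (n + 1)) R}
    (hf : Irreducible f) (hz : 0 < f.degreeOf 0) (hfg : ¬ f ∣ g) :
    ∃ r : MvPolynomial (Fin n) R, r ≠ 0 ∧ r.totalDegree ≤ 2 * (f.totalDegree * g.totalDegree) ∧
      ∃ a b, rename Fin.succ r = a * f + b * g := by
  rw [← natDegree_finSuccEquiv] at hz
  have hdeg (h : MvPolynomial (Fin (n + 1)) R) :
      (finSuccEquiv R n h).natDegree ≤ h.totalDegree := by
    rw [natDegree_finSuccEquiv]; exact degreeOf_le_totalDegree _ _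
  refine ⟨(finSuccEquiv R n f).resultant (finSuccEquiv R n g),
    resultant_ne_zero_of_not_dvd ((MulEquiv.irreducible_iff (finSuccEquiv R n)).2 hf) hz
      (by rwa [map_dvd_iff]), ?_, ?_⟩
  · calc _ ≤ _ := totalDegree_resultant_le (totalDegree_coeff_finSuccEquiv_le f)
          (totalDegree_coeff_finSuccEquiv_le g) _ _
      _ ≤ f.totalDegree * g.totalDegree + g.totalDegree * f.totalDegree := by
          gcongr <;> exact hdeg _
      _ = 2 * (f.totalDegree * g.totalDegree) := by ring
  · obtain ⟨a, b, -, -, h⟩ :=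
      Polynomial.exists_mul_add_mul_eq_C_resultant (finSuccEquiv R n f) (finSuccEquiv R n g)
        le_rfl le_rfl (Or.inl hz.ne')
    refine ⟨(finSuccEquiv R n).symm a, (finSuccEquiv R n).symm b, (finSuccEquiv R n).injective ?_⟩
    rw [finSuccEquiv_rename_succ, ← h]
    simp [mul_comm]

theorem card_le_degreeOf_of_eval_cons_eq_zero {R : Type*} [CommRing R] [IsDomain R] [Infinite R]
    {n : ℕ} {r : MvPolynomial (Fin (n + 1)) R} (hr : r ≠ 0) (A : Finset R)
    (hA : ∀ a ∈ A, ∀ s, eval (Fin.cons a s : Fin (n + 1) → R) r = 0) : A.card ≤ r.degreeOf 0 := by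
  have hF : finSuccEquiv R n r ≠ 0 := by simpa using hr
  rw [← Finset.card_image_of_injective A (C_injective (Fin n) R), ← natDegree_finSuccEquiv]
  refine Polynomial.card_le_degree_of_subset_roots fun c hc => ?_
  obtain ⟨a, ha, rfl⟩ := Finset.mem_image.1 hc
  refine (Polynomial.mem_roots hF).2 (MvPolynomial.funext fun s => ?_)
  have := hA a ha s
  rw [eval_eq_eval_mv_eval', Polynomial.eval_map] at this
  rwa [map_zero, ← Polynomial.eval₂_at_apply, eval_C]

/-! ### S-lines and T-lines -/

/-- Parameters of a line in three-space with coordinates ordered `(z, x, y)`. They stand for the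
S-line `x = base, z = const + slope * y` as well as for the T-line
`y = base, z = const + slope * x`. -/
structure LineParam (K : Type*) where
  base : K
  const : K
  slope : K

section Restriction
variable {K : Type*} [CommRing K]

/-- Restriction of a polynomial in `(z, x, y)` to an S-line, parametrized by `y`. -/
def sRestrict (σ : LineParam K) : MvPolynomial (Fin 3) K →ₐ[K] K[X] :=
  aeval ![Polynomial.C σ.const + Polynomial.C σ.slope * Polynomial.X, Polynomial.C σ.base,
    Polynomial.X]

/-- Restriction of a polynomial in `(z, x, y)` to a T-line, parametrized by `x`. -/
def tRestrict (τ : LineParam K) : MvPolynomial (Fin 3) K →ₐ[K] K[X] :=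
  aeval ![Polynomial.C τ.const + Polynomial.C τ.slope * Polynomial.X, Polynomial.X,
    Polynomial.C τ.base]

theorem sRestrict_X_zero (σ : LineParam K) :
    sRestrict σ (X 0) = Polynomial.C σ.const + Polynomial.C σ.slope * Polynomial.X := by
  simp [sRestrict]

theorem sRestrict_X_one (σ : LineParam K) : sRestrict σ (X 1) = Polynomial.C σ.base := by
  simp [sRestrict]

theorem sRestrict_X_two (σ : LineParam K) : sRestrict σ (X 2) = Polynomial.X := by
  simp [sRestrict]

theorem sRestrict_rename_swap (σ : LineParam K) (f : MvPolynomial (Fin 3) K) :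
    sRestrict σ (rename (Equiv.swap 1 2) f) = tRestrict σ f := by
  rw [sRestrict, tRestrict, aeval_rename]
  congr 2
  funext i
  fin_cases i <;> simp [Equiv.swap_apply_def]

theorem eval_sRestrict (σ : LineParam K) (f : MvPolynomial (Fin 3) K) (u : K) :
    (sRestrict σ f).eval u = eval ![σ.const + σ.slope * u, σ.base, u] f := by
  rw [sRestrict, aeval_def, polynomial_eval_eval₂, ← eval₂_id]
  congr 1
  · ext; simp
  · funext i
    fin_cases i <;> simp

theorem eval_tRestrict (τ : LineParam K) (f : MvPolynomial (Fin 3) K) (u : K) :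
    (tRestrict τ f).eval u = eval ![τ.const + τ.slope * u, u, τ.base] f := by
  rw [← sRestrict_rename_swap, eval_sRestrict, eval_rename]
  congr 2
  funext i
  fin_cases i <;> simp [Equiv.swap_apply_def]

theorem natDegree_sRestrict_le (σ : LineParam K) (f : MvPolynomial (Fin 3) K) :
    (sRestrict σ f).natDegree ≤ f.totalDegree := by
  rw [← mul_one f.totalDegree]
  refine aeval_natDegree_le f le_rfl _ fun i => ?_
  fin_cases i
  · simp only [Fin.zero_eta, Matrix.cons_val_zero]; compute_degree
  · simp
  · simpa using Polynomial.natDegree_X_le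

theorem natDegree_tRestrict_le (τ : LineParam K) (f : MvPolynomial (Fin 3) K) :
    (tRestrict τ f).natDegree ≤ f.totalDegree := by
  rw [← sRestrict_rename_swap]
  exact (natDegree_sRestrict_le τ _).trans (totalDegree_rename_le _ f)

theorem derivative_sRestrict (σ : LineParam K) (f : MvPolynomial (Fin 3) K) :
    Polynomial.derivative (sRestrict σ f) =
      sRestrict σ (pderiv 2 f) + Polynomial.C σ.slope * sRestrict σ (pderiv 0 f) := by
  have hz : Polynomial.derivative (Polynomial.C σ.const + Polynomial.C σ.slope * Polynomial.X) =
      Polynomial.C σ.slope := by simp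
  refine (derivation_aeval Polynomial.derivative' _ f).trans ?_
  rw [Fin.sum_univ_three]
  change _ * Polynomial.derivative (_ + _) + _ * Polynomial.derivative (Polynomial.C _) +
    _ * Polynomial.derivative Polynomial.X = _
  rw [hz, Polynomial.derivative_C, Polynomial.derivative_X, mul_zero, add_zero, mul_one, add_comm]
  exact congrArg _ (mul_comm _ _)

end Restriction

section Bezout
variable {K ι : Type*} [Field K] [Infinite K] {f g : MvPolynomial (Fin 3) K}

/-- A form of Bezout's theorem: eliminating `z` turns the common S-lines into lines `x = const` of a
plane curve. -/
theorem card_sLine_le_of_not_dvd (hf : Irreducible f) (hz : 0 < f.degreeOf 0) (hfg : ¬ f ∣ g)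
    {S : Finset ι} {line : ι → LineParam K} (hinj : Set.InjOn (fun i => (line i).base) S)
    (hS : ∀ i ∈ S, sRestrict (line i) f = 0 ∧ sRestrict (line i) g = 0) :
    S.card ≤ 2 * (f.totalDegree * g.totalDegree) := by
  obtain ⟨r, hr, hdeg, a, b, hab⟩ := exists_rename_succ_eq_of_not_dvd hf hz hfg
  rw [← Finset.card_image_of_injOn hinj]
  refine (card_le_degreeOf_of_eval_cons_eq_zero hr _ fun x hx s => ?_).trans
    ((degreeOf_le_totalDegree r 0).trans hdeg)
  obtain ⟨i, hi, rfl⟩ := Finset.mem_image.1 hx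
  have hzero : (sRestrict (line i) (rename Fin.succ r)).eval (s 0) = 0 := by
    simp [hab, hS i hi]
  rw [eval_sRestrict, eval_rename] at hzero
  convert hzero using 3
  ext j
  fin_cases j <;> simp

theorem card_tLine_le_of_not_dvd (hf : Irreducible f) (hz : 0 < f.degreeOf 0) (hfg : ¬ f ∣ g)
    {T : Finset ι} {line : ι → LineParam K} (hinj : Set.InjOn (fun i => (line i).base) T)
    (hT : ∀ i ∈ T, tRestrict (line i) f = 0 ∧ tRestrict (line i) g = 0) :
    T.card ≤ 2 * (f.totalDegree * g.totalDegree) := by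
  set e := renameEquiv K (Equiv.swap (1 : Fin 3) 2)
  have hze : 0 < (e f).degreeOf 0 :=
    hz.trans_eq (degreeOf_rename_of_injective (Equiv.swap (1 : Fin 3) 2).injective 0).symm
  rw [← totalDegree_renameEquiv (Equiv.swap 1 2) f, ← totalDegree_renameEquiv (Equiv.swap 1 2) g]
  refine card_sLine_le_of_not_dvd ((MulEquiv.irreducible_iff e).2 hf) hze
    (by rwa [map_dvd_iff]) hinj fun i hi => ?_
  simpa [e, sRestrict_rename_swap] using hT i hi

theorem dvd_of_infinite_sLines (hf : Irreducible f) (hz : 0 < f.degreeOf 0)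
    {A : Set K} (hA : A.Infinite) {line : K → LineParam K} (hbase : ∀ x, (line x).base = x)
    (hline : ∀ x ∈ A, sRestrict (line x) f = 0 ∧ sRestrict (line x) g = 0) : f ∣ g := by
  by_contra hfg
  obtain ⟨S, hSA, hS⟩ := hA.exists_subset_card_eq (2 * (f.totalDegree * g.totalDegree) + 1)
  have := card_sLine_le_of_not_dvd hf hz hfg (S := S) (line := line) (by simp [hbase])
    fun x hx => hline x (hSA hx)
  omega

end Bezout

/-! ### Surfaces ruled by S-lines -/

section Flex
variable {K : Type*} [CommRing K]

/-- The numerator of `-d²z/dy²` along the curves cut out of the surface `f = 0` by the planes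
`x = const`. It vanishes on every S-line of the surface, and `f ∣ flex f` says that the surface is
ruled by S-lines. -/
def flex (f : MvPolynomial (Fin 3) K) : MvPolynomial (Fin 3) K :=
  pderiv 2 (pderiv 2 f) * pderiv 0 f * pderiv 0 f
    - 2 • (pderiv 2 (pderiv 0 f) * pderiv 2 f * pderiv 0 f)
    + pderiv 0 (pderiv 0 f) * pderiv 2 f * pderiv 2 f

theorem totalDegree_flex_le (f : MvPolynomial (Fin 3) K) :
    (flex f).totalDegree ≤ 3 * f.totalDegree := by
  have h₁ (i : Fin 3) : (pderiv i f).totalDegree ≤ f.totalDegree :=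
    (totalDegree_pderiv_le i f).trans (Nat.sub_le _ _)
  have h₂ (i j : Fin 3) : (pderiv i (pderiv j f)).totalDegree ≤ f.totalDegree :=
    (totalDegree_pderiv_le i _).trans ((Nat.sub_le _ _).trans (h₁ j))
  have hterm (i j k l : Fin 3) :
      (pderiv i (pderiv j f) * pderiv k f * pderiv l f).totalDegree ≤ 3 * f.totalDegree := by
    have := totalDegree_mul (pderiv i (pderiv j f) * pderiv k f) (pderiv l f)
    have := totalDegree_mul (pderiv i (pderiv j f)) (pderiv k f)
    linarith [h₂ i j, h₁ k, h₁ l]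
  exact (totalDegree_add _ _).trans (max_le ((totalDegree_sub _ _).trans
    (max_le (hterm ..) ((totalDegree_smul_le _ _).trans (hterm ..)))) (hterm ..))

/-- The restriction `h` of `f` to an S-line satisfies `f_z² h'' = flex f + h' * (…)`. -/
theorem sq_mul_derivative_derivative_sRestrict (σ : LineParam K) (f : MvPolynomial (Fin 3) K) :
    ∃ v, sRestrict σ (pderiv 0 f) ^ 2 *
        Polynomial.derivative (Polynomial.derivative (sRestrict σ f)) =
      sRestrict σ (flex f) + Polynomial.derivative (sRestrict σ f) * v := by
  refine ⟨2 * sRestrict σ (pderiv 2 (pderiv 0 f)) * sRestrict σ (pderiv 0 f)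
    - sRestrict σ (pderiv 0 (pderiv 0 f)) *
      (sRestrict σ (pderiv 2 f) - Polynomial.C σ.slope * sRestrict σ (pderiv 0 f)), ?_⟩
  simp only [derivative_sRestrict, Polynomial.derivative_C_mul,
    pderiv_comm 0 2 f, flex, map_add, map_sub, map_mul, map_ofNat, nsmul_eq_mul, Nat.cast_ofNat]
  ring

end Flex

section Ruled
variable {K : Type*} [Field K] {f : MvPolynomial (Fin 3) K}

theorem sRestrict_flex_eq_zero {σ : LineParam K} (hσ : sRestrict σ f = 0) :
    sRestrict σ (flex f) = 0 := by
  obtain ⟨v, hv⟩ := sq_mul_derivative_derivative_sRestrict σ f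
  simpa [hσ] using hv.symm

theorem sRestrict_eq_zero_of_dvd_flex (hd : (f.totalDegree ! : K) ≠ 0) (hflex : f ∣ flex f)
    {σ : LineParam K} {y : K} (h0 : (sRestrict σ f).IsRoot y)
    (h1 : (Polynomial.derivative (sRestrict σ f)).IsRoot y)
    (hz : ¬ (sRestrict σ (pderiv 0 f)).IsRoot y) : sRestrict σ f = 0 := by
  obtain ⟨q, hq⟩ := hflex
  obtain ⟨v, hv⟩ := sq_mul_derivative_derivative_sRestrict σ f
  rw [hq, map_mul] at hv
  exact eq_zero_of_sq_mul_derivative_derivative_eq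
    (factorial_ne_zero_of_le hd (natDegree_sRestrict_le σ f)) hz h0 h1 hv

end Ruled

/-! ### Ruled surfaces with two T-lines -/

section Quadric
variable {K : Type*} [Field K] {f : MvPolynomial (Fin 3) K}

/-- On the surface `f = 0` this polynomial vanishes at the points whose tangent in the plane
`x = const` meets the T-line `τ`. -/
def contact (f : MvPolynomial (Fin 3) K) (τ : LineParam K) : MvPolynomial (Fin 3) K :=
  pderiv 0 f * (X 0 - C τ.const - C τ.slope * X 1) + (X 2 - C τ.base) * pderiv 2 f

/-- The S-line in the plane `x = const` that joins two T-lines. -/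
def LineParam.join (τ₁ τ₂ : LineParam K) (x : K) : LineParam K :=
  let slope := (τ₂.const + τ₂.slope * x - (τ₁.const + τ₁.slope * x)) / (τ₂.base - τ₁.base)
  ⟨x, τ₁.const + τ₁.slope * x - slope * τ₁.base, slope⟩

theorem LineParam.join_meets_left (τ₁ τ₂ : LineParam K) (x : K) :
    (τ₁.join τ₂ x).const + (τ₁.join τ₂ x).slope * τ₁.base = τ₁.const + τ₁.slope * x := by
  simp [join]

theorem LineParam.join_meets_right {τ₁ τ₂ : LineParam K} (hne : τ₁.base ≠ τ₂.base) (x : K) :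
    (τ₁.join τ₂ x).const + (τ₁.join τ₂ x).slope * τ₂.base = τ₂.const + τ₂.slope * x := by
  have : τ₂.base - τ₁.base ≠ 0 := sub_ne_zero.2 hne.symm
  simp only [join]
  field_simp
  ring

theorem sRestrict_contact {σ τ : LineParam K}
    (hmeet : σ.const + σ.slope * τ.base = τ.const + τ.slope * σ.base) :
    sRestrict σ (contact f τ) =
      (Polynomial.X - Polynomial.C τ.base) * Polynomial.derivative (sRestrict σ f) := by
  have hconst : σ.const = τ.const + τ.slope * σ.base - σ.slope * τ.base := by
    linear_combination hmeet
  rw [derivative_sRestrict, contact]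
  simp only [map_add, map_sub, map_mul, algHom_C, Polynomial.algebraMap_eq, sRestrict_X_zero,
    sRestrict_X_one, sRestrict_X_two, hconst]
  ring

theorem dvd_contact [Infinite K] (hf : Irreducible f) (hd : (f.totalDegree ! : K) ≠ 0)
    (hz : 0 < f.degreeOf 0) (hflex : f ∣ flex f) {τ : LineParam K} (hτ : tRestrict τ f = 0)
    (hτz : tRestrict τ (pderiv 0 f) ≠ 0) : f ∣ contact f τ := by
  have hinf : {x | ¬ (tRestrict τ (pderiv 0 f)).IsRoot x}.Infinite :=
    (Polynomial.finite_setOfPred_isRoot hτz).infinite_compl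
  let slope (x : K) := - (tRestrict τ (pderiv 2 f)).eval x / (tRestrict τ (pderiv 0 f)).eval x
  let σ (x : K) : LineParam K := ⟨x, τ.const + τ.slope * x - slope x * τ.base, slope x⟩
  have hmeet (x : K) : (σ x).const + (σ x).slope * τ.base = τ.const + τ.slope * (σ x).base := by
    simp [σ]
  have heval (x : K) (g : MvPolynomial (Fin 3) K) :
      (sRestrict (σ x) g).eval τ.base = (tRestrict τ g).eval x := by
    rw [eval_sRestrict, eval_tRestrict, hmeet]
  refine dvd_of_infinite_sLines hf hz hinf (line := σ) (fun _ => rfl) fun x hx => ?_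
  have hx : (tRestrict τ (pderiv 0 f)).eval x ≠ 0 := hx
  have hσ : sRestrict (σ x) f = 0 := by
    refine sRestrict_eq_zero_of_dvd_flex hd hflex (y := τ.base) ?_ ?_ ?_
    · simp [heval, hτ]
    · rw [Polynomial.IsRoot, derivative_sRestrict, Polynomial.eval_add, Polynomial.eval_mul,
        Polynomial.eval_C, heval, heval]
      simp only [σ, slope]
      field_simp
      ring
    · rwa [Polynomial.IsRoot, heval]
  exact ⟨hσ, by simp [sRestrict_contact (hmeet x), hσ]⟩

theorem sRestrict_join_eq_zero [Infinite K] (hf : Irreducible f)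
    (hd : (f.totalDegree ! : K) ≠ 0) (hz : 0 < f.degreeOf 0) (hflex : f ∣ flex f)
    {τ₁ τ₂ : LineParam K} (hne : τ₁.base ≠ τ₂.base)
    (h₁ : tRestrict τ₁ f = 0) (h₂ : tRestrict τ₂ f = 0)
    (h₁z : tRestrict τ₁ (pderiv 0 f) ≠ 0) (h₂z : tRestrict τ₂ (pderiv 0 f) ≠ 0) (x : K) :
    sRestrict (τ₁.join τ₂ x) f = 0 := by
  set h := sRestrict (τ₁.join τ₂ x) f with hh
  have hdvd₁ := map_dvd (sRestrict (τ₁.join τ₂ x)) (dvd_contact hf hd hz hflex h₁ h₁z)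
  have hdvd₂ := map_dvd (sRestrict (τ₁.join τ₂ x)) (dvd_contact hf hd hz hflex h₂ h₂z)
  rw [sRestrict_contact (LineParam.join_meets_left τ₁ τ₂ x), ← hh] at hdvd₁
  rw [sRestrict_contact (LineParam.join_meets_right hne x), ← hh] at hdvd₂
  have hdvd : h ∣ Polynomial.derivative h := by
    have := dvd_sub hdvd₁ hdvd₂
    rw [← sub_mul, sub_sub_sub_cancel_left, ← Polynomial.C_sub] at this
    exact (Polynomial.isUnit_C.2 (sub_ne_zero.2 hne.symm).isUnit).dvd_mul_left.1 this
  have hconst : h.natDegree = 0 := natDegree_eq_zero_of_dvd_derivative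
    (factorial_ne_zero_of_le hd (natDegree_sRestrict_le (τ₁.join τ₂ x) f)) hdvd
  have hroot : h.eval τ₁.base = 0 := by
    rw [hh, eval_sRestrict, LineParam.join_meets_left, LineParam.join, ← eval_tRestrict, h₁,
      Polynomial.eval_zero]
  rw [Polynomial.eq_C_of_natDegree_eq_zero hconst] at hroot ⊢
  simpa using hroot

/-- An irreducible surface ruled by S-lines that contains two T-lines is a quadric
`z = A x y + B x + C y + D`. -/
theorem exists_quadric_of_two_tLines [Infinite K] (hf : Irreducible f)
    (hd : (f.totalDegree ! : K) ≠ 0) (hz : 0 < f.degreeOf 0) (hflex : f ∣ flex f)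
    {τ₁ τ₂ : LineParam K} (hne : τ₁.base ≠ τ₂.base)
    (h₁ : tRestrict τ₁ f = 0) (h₂ : tRestrict τ₂ f = 0)
    (h₁z : tRestrict τ₁ (pderiv 0 f) ≠ 0) (h₂z : tRestrict τ₂ (pderiv 0 f) ≠ 0) :
    ∃ A B C D : K, ∀ σ, sRestrict σ f = 0 →
      σ.slope = A * σ.base + C ∧ σ.const = B * σ.base + D := by
  obtain ⟨A, B, E, D, hjoin⟩ : ∃ A B E D : K, ∀ x,
      τ₁.join τ₂ x = ⟨x, B * x + D, A * x + E⟩ := by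
    set A := (τ₂.slope - τ₁.slope) / (τ₂.base - τ₁.base) with hA
    set E := (τ₂.const - τ₁.const) / (τ₂.base - τ₁.base) with hE
    refine ⟨A, τ₁.slope - A * τ₁.base, E, τ₁.const - E * τ₁.base, fun x => ?_⟩
    simp only [LineParam.join, LineParam.mk.injEq, true_and, hA, hE]
    constructor <;> ring
  set Q : MvPolynomial (Fin 3) K := X 0 - (C A * X 1 * X 2 + C B * X 1 + C E * X 2 + C D) with hQ
  have hQσ (σ : LineParam K) : sRestrict σ Q = Polynomial.C (σ.const - (B * σ.base + D)) +
      Polynomial.C (σ.slope - (A * σ.base + E)) * Polynomial.X := by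
    simp only [hQ, map_add, map_sub, map_mul, algHom_C, Polynomial.algebraMap_eq, sRestrict_X_zero,
      sRestrict_X_one, sRestrict_X_two]
    ring
  have hfQ : f ∣ Q := dvd_of_infinite_sLines hf hz Set.infinite_univ (line := τ₁.join τ₂)
    (fun _ => rfl) fun x _ => ⟨sRestrict_join_eq_zero hf hd hz hflex hne h₁ h₂ h₁z h₂z x, by
      simp [hQσ, hjoin]⟩
  refine ⟨A, B, E, D, fun σ hσ => ?_⟩
  have hzero : sRestrict σ Q = 0 := zero_dvd_iff.1 (hσ ▸ map_dvd (sRestrict σ) hfQ)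
  rw [hQσ] at hzero
  exact ⟨sub_eq_zero.1 (by simpa using congrArg (Polynomial.coeff · 1) hzero),
    sub_eq_zero.1 (by simpa using congrArg (Polynomial.coeff · 0) hzero)⟩

end Quadric

/-! ### Incidences on a surface -/

/-- Two families of lines in three-space with some of the incidences between them marked. Distinct
lines of one family are skew or parallel, and `quad` says that each T-line has at most `k` marked
S-lines on any given quadric `z = A x y + B x + C y + D`. -/
structure LineConfig (K ι κ : Type*) [Field K] where
  sLine : ι → LineParam K
  tLine : κ → LineParam K
  Marked : ι → κ → Prop
  k : ℕ
  sLine_base_injective : Function.Injective fun σ => (sLine σ).base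
  tLine_base_injective : Function.Injective fun τ => (tLine τ).base
  meet : ∀ σ τ, Marked σ τ → (sLine σ).const + (sLine σ).slope * (tLine τ).base =
    (tLine τ).const + (tLine τ).slope * (sLine σ).base
  quad : ∀ (A B C D : K) (τ : κ) (S : Finset ι),
    (∀ σ ∈ S, Marked σ τ ∧ (sLine σ).slope = A * (sLine σ).base + C ∧
      (sLine σ).const = B * (sLine σ).base + D) → S.card ≤ k

namespace LineConfig
variable {K ι κ : Type*} [Field K] (c : LineConfig K ι κ)

/-- The number of marked incidences between `S` and `T`. -/
def incidences (S : Finset ι) (T : Finset κ) : ℕ :=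
  ∑ τ ∈ T, (S.filter fun σ => c.Marked σ τ).card

theorem incidences_comm (S : Finset ι) (T : Finset κ) :
    c.incidences S T = ∑ σ ∈ S, (T.filter fun τ => c.Marked σ τ).card :=
  (Finset.sum_card_bipartiteAbove_eq_sum_card_bipartiteBelow c.Marked).symm

theorem incidences_le_of_subset_union_right {S : Finset ι} {T T₁ T₂ : Finset κ} (h : T ⊆ T₁ ∪ T₂) :
    c.incidences S T ≤ c.incidences S T₁ + c.incidences S T₂ := by
  refine (Finset.sum_le_sum_of_subset h).trans ?_
  rw [incidences, incidences, ← Finset.sum_union_inter]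
  exact Nat.le_add_right _ _

theorem incidences_le_of_subset_union_left {S S₁ S₂ : Finset ι} {T : Finset κ} (h : S ⊆ S₁ ∪ S₂) :
    c.incidences S T ≤ c.incidences S₁ T + c.incidences S₂ T := by
  simp only [incidences_comm]
  refine (Finset.sum_le_sum_of_subset h).trans ?_
  rw [← Finset.sum_union_inter]
  exact Nat.le_add_right _ _

theorem incidences_le_card_mul {S : Finset ι} {T : Finset κ} {b : ℕ}
    (h : ∀ τ ∈ T, (S.filter fun σ => c.Marked σ τ).card ≤ b) : c.incidences S T ≤ T.card * b :=
  Finset.sum_le_card_nsmul _ _ _ h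

variable {c} {f : MvPolynomial (Fin 3) K}

theorem eval_sRestrict_eq_eval_tRestrict {σ : ι} {τ : κ} (h : c.Marked σ τ) :
    (sRestrict (c.sLine σ) f).eval (c.tLine τ).base =
      (tRestrict (c.tLine τ) f).eval (c.sLine σ).base := by
  rw [eval_sRestrict, eval_tRestrict, c.meet σ τ h]

theorem card_le_totalDegree_of_tRestrict_ne_zero {S : Finset ι} {τ : κ}
    (hτ : tRestrict (c.tLine τ) f ≠ 0)
    (hS : ∀ σ ∈ S, c.Marked σ τ ∧ sRestrict (c.sLine σ) f = 0) : S.card ≤ f.totalDegree := by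
  rw [← Finset.card_image_of_injective S c.sLine_base_injective]
  refine (Polynomial.card_le_degree_of_subset_roots fun x hx => ?_).trans
    (natDegree_tRestrict_le (c.tLine τ) f)
  obtain ⟨σ, hσ, rfl⟩ := Finset.mem_image.1 hx
  rw [Polynomial.mem_roots hτ, Polynomial.IsRoot,
    ← eval_sRestrict_eq_eval_tRestrict (hS σ hσ).1, (hS σ hσ).2, Polynomial.eval_zero]

theorem card_le_totalDegree_of_sRestrict_ne_zero {T : Finset κ} {σ : ι}
    (hσ : sRestrict (c.sLine σ) f ≠ 0)
    (hT : ∀ τ ∈ T, c.Marked σ τ ∧ tRestrict (c.tLine τ) f = 0) : T.card ≤ f.totalDegree := by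
  rw [← Finset.card_image_of_injective T c.tLine_base_injective]
  refine (Polynomial.card_le_degree_of_subset_roots fun y hy => ?_).trans
    (natDegree_sRestrict_le (c.sLine σ) f)
  obtain ⟨τ, hτ, rfl⟩ := Finset.mem_image.1 hy
  rw [Polynomial.mem_roots hσ, Polynomial.IsRoot,
    eval_sRestrict_eq_eval_tRestrict (hT τ hτ).1, (hT τ hτ).2, Polynomial.eval_zero]

section Irreducible
variable [Infinite K]

theorem card_tLine_le_of_degreeOf_eq_zero (hf : f ≠ 0) (hz : f.degreeOf 0 = 0) {T : Finset κ}
    (hT : ∀ τ ∈ T, tRestrict (c.tLine τ) f = 0) : T.card ≤ f.totalDegree := by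
  obtain ⟨r, rfl⟩ := exists_rename_eq_of_vars_subset_range f _ (Fin.succ_injective 2) fun i hi => by
    rw [Fin.range_succ]
    rintro rfl
    exact mem_vars_iff_degreeOf_ne_zero.1 hi hz
  have hr : r ≠ 0 := by rintro rfl; exact hf (map_zero _)
  rw [← Finset.card_image_of_injective T c.tLine_base_injective]
  refine (card_le_degreeOf_of_eval_cons_eq_zero (r := rename (Equiv.swap 0 1) r)
    ((map_ne_zero_iff _ (rename_injective _ (Equiv.injective _))).2 hr) _ fun y hy s => ?_).trans
    ((degreeOf_le_totalDegree _ 0).trans ?_)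
  · obtain ⟨τ, hτ, rfl⟩ := Finset.mem_image.1 hy
    have hzero := eval_tRestrict (c.tLine τ) (rename Fin.succ r) (s 0)
    rw [hT τ hτ, Polynomial.eval_zero, eval_rename] at hzero
    rw [eval_rename, hzero]
    congr 2
    funext i
    fin_cases i <;> rfl
  · refine (totalDegree_rename_le _ r).trans ?_
    simpa [finSuccEquiv_rename_succ] using
      totalDegree_coeff_finSuccEquiv_le (rename Fin.succ r) 0

/-- Bezout's theorem bounds the T-lines on which `flex f` vanishes, and the S-lines of the surface
meet any other T-line in zeros of `flex f`. -/
theorem exists_exceptional_of_not_dvd_flex (hf : Irreducible f) (hz : 0 < f.degreeOf 0)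
    (hflex : ¬ f ∣ flex f) (S : Finset ι) {T : Finset κ}
    (hT : ∀ τ ∈ T, tRestrict (c.tLine τ) f = 0) :
    ∃ T' ⊆ T, T'.card ≤ 6 * f.totalDegree ^ 2 ∧ ∀ τ ∈ T \ T',
      (S.filter fun σ => c.Marked σ τ ∧ sRestrict (c.sLine σ) f = 0).card ≤ 3 * f.totalDegree := by
  refine ⟨T.filter fun τ => tRestrict (c.tLine τ) (flex f) = 0, Finset.filter_subset _ _, ?_,
    fun τ hτ => ?_⟩
  · refine (card_tLine_le_of_not_dvd hf hz hflex c.tLine_base_injective.injOn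
      fun τ hτ => ?_).trans ?_
    · exact (Finset.mem_filter.1 hτ).imp_left (hT τ)
    · nlinarith [totalDegree_flex_le f]
  · rw [← Finset.filter_not, Finset.mem_filter] at hτ
    refine (card_le_totalDegree_of_tRestrict_ne_zero hτ.2 fun σ hσ => ?_).trans
      (totalDegree_flex_le f)
    exact (Finset.mem_filter.1 hσ).2.imp_right sRestrict_flex_eq_zero

/-- Bezout's theorem bounds the T-lines on which `∂f/∂z` vanishes. If two others are left, the
surface is a quadric. -/
theorem exists_exceptional_of_dvd_flex (hf : Irreducible f) (hd : (f.totalDegree ! : K) ≠ 0)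
    (hz : 0 < f.degreeOf 0) (hflex : f ∣ flex f) (S : Finset ι) {T : Finset κ}
    (hT : ∀ τ ∈ T, tRestrict (c.tLine τ) f = 0) :
    ∃ T' ⊆ T, T'.card ≤ 6 * f.totalDegree ^ 2 ∧ ∀ τ ∈ T \ T',
      (S.filter fun σ => c.Marked σ τ ∧ sRestrict (c.sLine σ) f = 0).card ≤ c.k := by
  have hpos : 1 ≤ f.totalDegree := hz.trans_le (degreeOf_le_totalDegree f 0)
  have hderiv : (pderiv 0 f).totalDegree ≤ f.totalDegree - 1 := totalDegree_pderiv_le 0 f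
  have hndvd : ¬ f ∣ pderiv 0 f := fun h => by
    have := totalDegree_le_of_dvd_of_isDomain h
      (pderiv_ne_zero hz (factorial_ne_zero_of_le hd (degreeOf_le_totalDegree f 0)))
    omega
  set T₁ := T.filter fun τ => tRestrict (c.tLine τ) (pderiv 0 f) = 0 with hT₁
  have hcard : T₁.card ≤ 2 * f.totalDegree ^ 2 := by
    refine (card_tLine_le_of_not_dvd hf hz hndvd c.tLine_base_injective.injOn
      fun τ hτ => ?_).trans ?_
    · exact (Finset.mem_filter.1 hτ).imp_left (hT τ)
    · have : (pderiv 0 f).totalDegree ≤ f.totalDegree := by omega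
      nlinarith
  by_cases hfew : (T \ T₁).card ≤ 1
  · refine ⟨T, subset_rfl, ?_, by simp⟩
    have := Finset.card_sdiff_add_card_eq_card (Finset.filter_subset _ T : T₁ ⊆ T)
    nlinarith
  · refine ⟨T₁, Finset.filter_subset _ _, by omega, fun τ _ => ?_⟩
    obtain ⟨τ₁, h₁, τ₂, h₂, hne⟩ := Finset.one_lt_card.1 (not_le.1 hfew)
    rw [hT₁, ← Finset.filter_not, Finset.mem_filter] at h₁ h₂
    obtain ⟨A, B, C, D, hquad⟩ := exists_quadric_of_two_tLines hf hd hz hflex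
      (c.tLine_base_injective.ne hne) (hT τ₁ h₁.1) (hT τ₂ h₂.1) h₁.2 h₂.2
    exact c.quad A B C D τ _ fun σ hσ => (Finset.mem_filter.1 hσ).2.imp_right (hquad _)

theorem exists_exceptional_of_irreducible (hf : Irreducible f) (hd : (f.totalDegree ! : K) ≠ 0)
    (S : Finset ι) {T : Finset κ} (hT : ∀ τ ∈ T, tRestrict (c.tLine τ) f = 0) :
    ∃ T' ⊆ T, T'.card ≤ 6 * f.totalDegree ^ 2 ∧ ∀ τ ∈ T \ T',
      (S.filter fun σ => c.Marked σ τ ∧ sRestrict (c.sLine σ) f = 0).card ≤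
        3 * f.totalDegree + c.k := by
  rcases Nat.eq_zero_or_pos (f.degreeOf 0) with hz | hz
  · refine ⟨T, subset_rfl, ?_, by simp⟩
    nlinarith [card_tLine_le_of_degreeOf_eq_zero hf.ne_zero hz hT, Nat.le_self_pow two_ne_zero
      f.totalDegree]
  by_cases hflex : f ∣ flex f
  · obtain ⟨T', hsub, hcard, hT'⟩ := exists_exceptional_of_dvd_flex hf hd hz hflex S hT
    exact ⟨T', hsub, hcard, fun τ hτ => (hT' τ hτ).trans (Nat.le_add_left _ _)⟩
  · obtain ⟨T', hsub, hcard, hT'⟩ := exists_exceptional_of_not_dvd_flex hf hz hflex S hT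
    exact ⟨T', hsub, hcard, fun τ hτ => (hT' τ hτ).trans (Nat.le_add_right _ _)⟩

theorem exists_incidences_le_of_irreducible (hf : Irreducible f) (hd : (f.totalDegree ! : K) ≠ 0)
    (S : Finset ι) {T : Finset κ} (hT : ∀ τ ∈ T, tRestrict (c.tLine τ) f = 0) :
    ∃ T' ⊆ T, T'.card ≤ 6 * f.totalDegree ^ 2 ∧
      c.incidences S (T \ T') ≤
        (3 * f.totalDegree + c.k) * T.card + f.totalDegree * S.card := by
  obtain ⟨T', hsub, hcard, hon⟩ := exists_exceptional_of_irreducible hf hd S hT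
  refine ⟨T', hsub, hcard, ?_⟩
  have hsplit := Finset.filter_union_filter_not_eq (fun σ => sRestrict (c.sLine σ) f = 0) S
  refine (c.incidences_le_of_subset_union_left hsplit.ge).trans (add_le_add ?_ ?_)
  · refine (c.incidences_le_card_mul fun τ hτ => ?_).trans
      ((Nat.mul_le_mul_right _ (Finset.card_le_card Finset.sdiff_subset)).trans_eq (mul_comm _ _))
    rw [Finset.filter_filter]
    simpa only [and_comm] using hon τ hτ
  · rw [incidences_comm]
    refine (Finset.sum_le_card_nsmul _ _ f.totalDegree fun σ hσ => ?_).trans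
      ((Nat.mul_le_mul_right _ (Finset.card_le_card (Finset.filter_subset _ _))).trans_eq
        (mul_comm _ _))
    refine card_le_totalDegree_of_sRestrict_ne_zero (Finset.mem_filter.1 hσ).2 fun τ hτ => ?_
    obtain ⟨hτT, hmark⟩ := Finset.mem_filter.1 hτ
    exact ⟨hmark, hT τ (Finset.mem_sdiff.1 hτT).1⟩

theorem exists_incidences_le_of_ne_zero (hf : f ≠ 0) (hd : (f.totalDegree ! : K) ≠ 0)
    (S : Finset ι) {T : Finset κ} (hT : ∀ τ ∈ T, tRestrict (c.tLine τ) f = 0) :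
    ∃ T' ⊆ T, T'.card ≤ 6 * f.totalDegree ^ 2 ∧
      c.incidences S (T \ T') ≤
        (3 * f.totalDegree + c.k) * T.card + f.totalDegree * S.card := by
  induction f using UniqueFactorizationMonoid.induction_on_prime generalizing T with
  | h₁ => exact absurd rfl hf
  | h₂ u hu =>
    have hempty : T = ∅ := Finset.eq_empty_of_forall_notMem fun τ hτ =>
      not_isUnit_zero (hT τ hτ ▸ hu.map (tRestrict (c.tLine τ)))
    exact ⟨∅, by simp, by simp, by simp [hempty, incidences]⟩
  | h₃ g q hg hq ih =>
    rw [totalDegree_mul_of_isDomain hq.ne_zero hg] at hd ⊢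
    set Tq := T.filter fun τ => tRestrict (c.tLine τ) q = 0 with hTq
    set Tg := T.filter fun τ => ¬ tRestrict (c.tLine τ) q = 0 with hTg
    obtain ⟨T₁, hsub₁, hcard₁, hcount₁⟩ := exists_incidences_le_of_irreducible (T := Tq)
      hq.irreducible (factorial_ne_zero_of_le hd (Nat.le_add_right _ _)) S
      fun τ hτ => (Finset.mem_filter.1 hτ).2
    obtain ⟨T₂, hsub₂, hcard₂, hcount₂⟩ := ih (T := Tg) hg
      (factorial_ne_zero_of_le hd (Nat.le_add_left _ _)) fun τ hτ => by
        obtain ⟨hτT, hτq⟩ := Finset.mem_filter.1 hτ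
        exact (mul_eq_zero.1 ((map_mul (tRestrict (c.tLine τ)) q g).symm.trans
          (hT τ hτT))).resolve_left hτq
    refine ⟨T₁ ∪ T₂, Finset.union_subset (hsub₁.trans (Finset.filter_subset _ _))
      (hsub₂.trans (Finset.filter_subset _ _)), ?_, ?_⟩
    · have := Finset.card_union_le T₁ T₂
      nlinarith
    · have hcover : T \ (T₁ ∪ T₂) ⊆ (Tq \ T₁) ∪ (Tg \ T₂) := by
        intro τ hτ
        simp only [hTq, hTg, Finset.mem_sdiff, Finset.mem_union, Finset.mem_filter, not_or] at hτ ⊢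
        tauto
      have hcount := c.incidences_le_of_subset_union_right (S := S) hcover
      have hcardT : Tq.card + Tg.card = T.card := Finset.card_filter_add_card_filter_not _
      rw [← hcardT]
      nlinarith

end Irreducible
end LineConfig

/-! ### The incidence bound by the polynomial method -/

theorem finrank_restrictSupport_range {R σ α : Type*} [CommRing R] [StrongRankCondition R]
    [Fintype α] {E : α → σ →₀ ℕ} (hE : Function.Injective E) :
    Module.finrank R (restrictSupport R (Set.range E)) = Fintype.card α := by
  rw [Module.finrank_eq_nat_card_basis (basisRestrictSupport R _), Nat.card_range_of_injective hE,
    Nat.card_eq_fintype_card]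

/-- Parameter counting: `D³` coefficients against at most `3 D` conditions for each S-line. -/
theorem exists_ne_zero_sRestrict_eq_zero {K ι : Type*} [Field K] (line : ι → LineParam K)
    {S : Finset ι} {D : ℕ} (hD : 3 * D * S.card < D ^ 3) :
    ∃ f : MvPolynomial (Fin 3) K, f ≠ 0 ∧ f.totalDegree < 3 * D ∧
      ∀ σ ∈ S, sRestrict (line σ) f = 0 := by
  let E : (Fin 3 → Fin D) → (Fin 3 →₀ ℕ) := fun e => Finsupp.equivFunOnFinite.symm fun i => e i
  have hE : Function.Injective E := Finsupp.equivFunOnFinite.symm.injective.comp fun e₁ e₂ h =>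
    funext fun i => Fin.ext (congrFun h i)
  have hdeg {f : MvPolynomial (Fin 3) K} (hf : f ∈ restrictSupport K (Set.range E)) :
      f.totalDegree < 3 * D := by
    have hDpos : 0 < D := Nat.pos_of_ne_zero fun h => by simp [h] at hD
    refine (Finset.sup_lt_iff (Nat.mul_pos three_pos hDpos)).2 fun m hm => ?_
    obtain ⟨e, rfl⟩ := hf hm
    rw [Finsupp.sum_fintype _ _ fun _ => rfl, Fin.sum_univ_three]
    change (e 0 : ℕ) + e 1 + e 2 < 3 * D
    omega
  let coeffs : restrictSupport K (Set.range E) →ₗ[K] (S × Fin (3 * D) → K) :=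
    LinearMap.pi fun q => (Polynomial.lcoeff K q.2).comp
      ((sRestrict (line q.1)).toLinearMap.comp (Submodule.subtype _))
  have hfinite : Module.Finite K (restrictSupport K (Set.range E)) :=
    Module.Finite.of_basis (basisRestrictSupport K _)
  have hker : coeffs.ker ≠ ⊥ := LinearMap.ker_ne_bot_of_finrank_lt <| by
    rw [finrank_restrictSupport_range hE]
    simpa [mul_comm S.card] using hD
  obtain ⟨⟨f, hf⟩, hfker, hne⟩ := (Submodule.ne_bot_iff _).1 hker
  refine ⟨f, fun h => hne (Subtype.ext h), hdeg hf, fun σ hσ => ?_⟩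
  ext j
  rw [Polynomial.coeff_zero]
  rcases lt_or_ge j (3 * D) with hj | hj
  · exact congrFun (LinearMap.mem_ker.1 hfker) (⟨σ, hσ⟩, ⟨j, hj⟩)
  · exact Polynomial.coeff_eq_zero_of_natDegree_lt
      (((natDegree_sRestrict_le (line σ) f).trans_lt (hdeg hf)).trans_le hj)

namespace LineConfig
variable {K ι κ : Type*} [Field K] (c : LineConfig K ι κ)

theorem incidences_le_mul_of_card_le_mul {T : Finset κ} {m b : ℕ}
    (hb : ∀ S : Finset ι, S.card ≤ m → c.incidences S T ≤ b) {n : ℕ} {S : Finset ι}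
    (hS : S.card ≤ n * m) : c.incidences S T ≤ n * b := by
  induction n generalizing S with
  | zero =>
    obtain rfl : S = ∅ := by simpa using hS
    simp [incidences]
  | succ n ih =>
    obtain ⟨A, hAS, hA⟩ := Finset.exists_subset_card_eq (min_le_right m S.card)
    have hdiff : (S \ A).card ≤ n * m := by
      rw [Finset.card_sdiff_of_subset hAS, hA]
      rw [Nat.succ_mul] at hS
      omega
    have hunion := c.incidences_le_of_subset_union_left (T := T)
      (Finset.union_sdiff_of_subset hAS).ge
    rw [Nat.succ_mul]
    linarith [hb A (by omega), ih hdiff]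

variable [Infinite K]

/-- One step of the induction on the number of S-lines: the `216 M²` exceptional T-lines of a
surface of degree at most `6 M` through `S` are left to the hypothesis `hb`. -/
theorem incidences_le_of_exceptional {M b : ℕ} (hM : 0 < M) (hd : ∀ d < 6 * M, (d ! : K) ≠ 0)
    {S : Finset ι} (hS : S.card ≤ M ^ 2)
    (hb : ∀ T : Finset κ, T.card ≤ 216 * M ^ 2 → c.incidences S T ≤ b) (T : Finset κ) :
    c.incidences S T ≤ (24 * M + c.k) * T.card + 6 * M ^ 3 + b := by
  obtain ⟨f, hf, hdeg, hfS⟩ := exists_ne_zero_sRestrict_eq_zero c.sLine (S := S) (D := 2 * M) <| by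
    have : 0 < M ^ 3 := by positivity
    nlinarith
  have hdeg : f.totalDegree < 6 * M := by omega
  set Ton := T.filter fun τ => tRestrict (c.tLine τ) f = 0 with hTon
  set Toff := T.filter fun τ => ¬ tRestrict (c.tLine τ) f = 0 with hToff
  obtain ⟨T', -, hT', hcount⟩ := exists_incidences_le_of_ne_zero (c := c) hf (hd _ hdeg) S
    (T := Ton) fun τ hτ => (Finset.mem_filter.1 hτ).2
  have hoff : c.incidences S Toff ≤ Toff.card * (6 * M) := c.incidences_le_card_mul fun τ hτ =>
    (card_le_totalDegree_of_tRestrict_ne_zero (Finset.mem_filter.1 hτ).2 fun σ hσ =>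
      ⟨(Finset.mem_filter.1 hσ).2, hfS σ (Finset.mem_filter.1 hσ).1⟩).trans hdeg.le
  have hon : c.incidences S (Ton \ T') ≤ (18 * M + c.k) * Ton.card + 6 * M * M ^ 2 := by
    have : 3 * f.totalDegree ≤ 18 * M := by omega
    exact hcount.trans (by gcongr)
  have hexc : c.incidences S T' ≤ b := hb T' <| hT'.trans <| by
    have : f.totalDegree ^ 2 ≤ (6 * M) ^ 2 := by gcongr
    linarith
  have hcover : T ⊆ Toff ∪ (Ton \ T' ∪ T') := by
    intro τ hτ
    simp only [hTon, hToff, Finset.mem_union, Finset.mem_sdiff, Finset.mem_filter]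
    tauto
  have hsum := c.incidences_le_of_subset_union_right (S := S) hcover
  have hsum' := c.incidences_le_of_subset_union_right (S := S) (subset_rfl (a := Ton \ T' ∪ T'))
  have hcard : Ton.card + Toff.card = T.card := Finset.card_filter_add_card_filter_not _
  rw [← hcard]
  nlinarith

/-- The constants solve the recursion obtained by splitting `S` into four pieces. -/
theorem incidences_le_of_card_le_four_pow (r : ℕ) (hd : ∀ d < 3 * 2 ^ r, (d ! : K) ≠ 0)
    {S : Finset ι} (hS : S.card ≤ 4 ^ r) (T : Finset κ) :
    c.incidences S T ≤
      48 * 2 ^ r * T.card + 10374 * 8 ^ r + 4 * c.k * T.card + 864 * c.k * r * 4 ^ r := by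
  induction r generalizing S T with
  | zero =>
    have : c.incidences S T ≤ T.card * 1 := c.incidences_le_card_mul fun τ _ =>
      (Finset.card_filter_le _ _).trans hS
    simp only [pow_zero]
    nlinarith [Nat.zero_le (4 * c.k * T.card)]
  | succ r ih =>
    set M := 2 ^ r with hM
    have h4 : 4 ^ r = M ^ 2 := by rw [hM, ← pow_mul, mul_comm, pow_mul]; rfl
    have h8 : 8 ^ r = M ^ 3 := by rw [hM, ← pow_mul, mul_comm, pow_mul]; rfl
    rw [pow_succ, ← hM] at hd
    rw [h4, h8] at ih
    rw [pow_succ, h4, mul_comm] at hS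
    have hpiece := c.incidences_le_mul_of_card_le_mul (T := T) (fun A hA =>
      c.incidences_le_of_exceptional (Nat.two_pow_pos r) (fun d hlt => hd d (by omega)) hA
        (b := 48 * M * (216 * M ^ 2) + 10374 * M ^ 3 + 4 * c.k * (216 * M ^ 2)
          + 864 * c.k * r * M ^ 2)
        (fun T' hT' => (ih (fun d hlt => hd d (by omega)) hA T').trans (by gcongr)) T) hS
    refine hpiece.trans_eq ?_
    rw [pow_succ 2 r, pow_succ 4 r, pow_succ 8 r, h4, h8]
    ring

theorem incidences_le_of_card_le (r : ℕ) (hd : ∀ d < 3 * 2 ^ r, (d ! : K) ≠ 0)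
    {S : Finset ι} {T : Finset κ} (hS : S.card ≤ 64 * 4 ^ r) (hT : T.card ≤ 64 * 4 ^ r) :
    c.incidences S T ≤ 2 ^ 20 * (8 ^ r + c.k * (r + 1) * 4 ^ r) := by
  refine (c.incidences_le_mul_of_card_le_mul
    (fun A hA => c.incidences_le_of_card_le_four_pow r hd hA T) hS).trans ?_
  have h8 : 2 ^ r * 4 ^ r = 8 ^ r := by rw [← mul_pow]; norm_num
  have h₁ : 2 ^ r * T.card ≤ 64 * 8 ^ r := by nlinarith [Nat.mul_le_mul_left (2 ^ r) hT]
  have h₂ : c.k * T.card ≤ 64 * (c.k * 4 ^ r) := by nlinarith [Nat.mul_le_mul_left c.k hT]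
  have h₃ : 0 ≤ c.k * r * 4 ^ r := Nat.zero_le _
  linarith [Nat.zero_le (8 ^ r), Nat.zero_le (c.k * 4 ^ r)]

end LineConfig

/-! ### The twisted line configuration of a grid -/

section Twist
variable {F : Type*} [Field F]

instance : Infinite (RatFunc F) := Infinite.of_injective _ (RatFunc.algebraMap_injective F)

theorem eq_of_sum_C_mul_X_pow_eq {n : ℕ} {a b : Fin n → F}
    (h : ∑ i, RatFunc.C (a i) * RatFunc.X ^ (i : ℕ) = ∑ i, RatFunc.C (b i) * RatFunc.X ^ (i : ℕ)) :
    a = b := by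
  have hcoe (a : Fin n → F) : ∑ i, RatFunc.C (a i) * RatFunc.X ^ (i : ℕ) =
      algebraMap F[X] (RatFunc F) (∑ i, Polynomial.C (a i) * Polynomial.X ^ (i : ℕ)) := by
    simp
  rw [hcoe, hcoe] at h
  funext j
  have hcoeff := congrArg (Polynomial.coeff · j) (RatFunc.algebraMap_injective F h)
  simpa [Polynomial.finsetSum_coeff, Polynomial.coeff_X_pow, Fin.val_inj] using hcoeff

theorem one_add_X_pow_mul_C_ne_zero {j : ℕ} (hj : j ≠ 0) (m : F) :
    1 + RatFunc.X ^ j * RatFunc.C m ≠ 0 := by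
  have hpoly : (1 + Polynomial.X ^ j * Polynomial.C m : F[X]) ≠ 0 := fun h => by
    simpa [hj.symm] using congrArg (Polynomial.coeff · 0) h
  simpa only [map_add, map_one, map_mul, map_pow, RatFunc.algebraMap_X, RatFunc.algebraMap_C] using
    RatFunc.algebraMap_ne_zero hpoly

/-- The S-line attached to `(a, m, c)`. The line `x = a, z = c + m y` is not determined by its `x`;
the change of coordinates with the generic parameter `λ = RatFunc.X` used here makes it so. -/
def twistedSLine (σ : F × F × F) : LineParam (RatFunc F) where
  base := (.C σ.1 + .X * .C σ.2.1 + .X ^ 2 * .C σ.2.2) / (1 + .X ^ 3 * .C σ.2.1)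
  const := .C σ.2.2 / (1 + .X ^ 3 * .C σ.2.1)
  slope := .C σ.2.1 / (1 + .X ^ 3 * .C σ.2.1)

/-- The T-line attached to `(a, m, c)`, that is, to `y = a, z = c + m x`, twisted so that it still
meets the twisted S-lines attached to the S-lines that it met. -/
def twistedTLine (τ : F × F × F) : LineParam (RatFunc F) where
  base := (.C τ.1 + .X * .C τ.2.1 + .X ^ 3 * .C τ.2.2) / (1 + .X ^ 2 * .C τ.2.1)
  const := .C τ.2.2 / (1 + .X ^ 2 * .C τ.2.1)
  slope := .C τ.2.1 / (1 + .X ^ 2 * .C τ.2.1)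

theorem twistedSLine_base_injective :
    Function.Injective fun σ : F × F × F => (twistedSLine σ).base := by
  rintro ⟨a, m, c⟩ ⟨a', m', c'⟩ h
  simp only [twistedSLine] at h
  rw [div_eq_div_iff (one_add_X_pow_mul_C_ne_zero three_ne_zero _)
    (one_add_X_pow_mul_C_ne_zero three_ne_zero _)] at h
  have hcoeff : ![a, m, c, a * m', m * m', c * m'] = ![a', m', c', a' * m, m' * m, c' * m] := by
    refine eq_of_sum_C_mul_X_pow_eq ?_
    simp only [Fin.sum_univ_six, map_mul, Matrix.cons_val, Fin.coe_ofNat_eq_mod]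
    linear_combination h
  have h₀ : a = a' := congrFun hcoeff 0
  have h₁ : m = m' := congrFun hcoeff 1
  have h₂ : c = c' := congrFun hcoeff 2
  rw [h₀, h₁, h₂]

theorem twistedTLine_base_injective :
    Function.Injective fun τ : F × F × F => (twistedTLine τ).base := by
  rintro ⟨a, m, c⟩ ⟨a', m', c'⟩ h
  simp only [twistedTLine] at h
  rw [div_eq_div_iff (one_add_X_pow_mul_C_ne_zero two_ne_zero _)
    (one_add_X_pow_mul_C_ne_zero two_ne_zero _)] at h
  have hcoeff : ![a, m, a * m', c + m * m', 0, c * m'] =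
      ![a', m', a' * m, c' + m' * m, 0, c' * m] := by
    refine eq_of_sum_C_mul_X_pow_eq ?_
    simp only [Fin.sum_univ_six, map_add, map_mul, map_zero, Matrix.cons_val, Fin.coe_ofNat_eq_mod]
    linear_combination h
  have h₀ : a = a' := congrFun hcoeff 0
  have h₁ : m = m' := congrFun hcoeff 1
  have h₃ : c + m * m' = c' + m' * m := congrFun hcoeff 3
  rw [h₁, add_left_inj] at h₃
  rw [h₀, h₁, h₃]

theorem twistedSLine_meets_twistedTLine {a m c a' m' c' : F} (h : m * a' + c = m' * a + c') :
    (twistedSLine (a, m, c)).const +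
        (twistedSLine (a, m, c)).slope * (twistedTLine (a', m', c')).base =
      (twistedTLine (a', m', c')).const +
        (twistedTLine (a', m', c')).slope * (twistedSLine (a, m, c)).base := by
  have hC : RatFunc.C m * RatFunc.C a' + RatFunc.C c =
      RatFunc.C m' * RatFunc.C a + RatFunc.C c' := by
    rw [← map_mul, ← map_mul, ← map_add, ← map_add, h]
  have hm := one_add_X_pow_mul_C_ne_zero three_ne_zero m
  have hm' := one_add_X_pow_mul_C_ne_zero two_ne_zero m'
  simp only [twistedSLine, twistedTLine]
  field_simp
  linear_combination hC

theorem one_sub_X_pow_mul_twistedSLine_slope (σ : F × F × F) :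
    1 - .X ^ 3 * (twistedSLine σ).slope = (1 + .X ^ 3 * .C σ.2.1)⁻¹ := by
  have := one_add_X_pow_mul_C_ne_zero three_ne_zero σ.2.1
  simp only [twistedSLine]
  field_simp
  ring

theorem C_mul_one_sub_X_pow_mul_twistedSLine_slope (σ : F × F × F) :
    .C σ.1 * (1 - .X ^ 3 * (twistedSLine σ).slope) =
      (twistedSLine σ).base - .X * (twistedSLine σ).slope - .X ^ 2 * (twistedSLine σ).const := by
  rw [one_sub_X_pow_mul_twistedSLine_slope]
  have := one_add_X_pow_mul_C_ne_zero three_ne_zero σ.2.1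
  simp only [twistedSLine]
  field_simp
  ring

/-- On a quadric, `a` is a Möbius function of the base of the twisted S-line attached to
`(a, m, c)`, so it is injective or constant. -/
theorem fst_eq_of_twistedSLine_on_quadric {A B C D : RatFunc F} {σ₀ σ₁ σ : F × F × F}
    (hne : σ₀ ≠ σ₁) (hfst : σ₀.1 = σ₁.1)
    (hquad : ∀ ρ ∈ [σ₀, σ₁, σ], (twistedSLine ρ).slope = A * (twistedSLine ρ).base + C ∧
      (twistedSLine ρ).const = B * (twistedSLine ρ).base + D) : σ.1 = σ₀.1 := by
  let x (ρ : F × F × F) := (twistedSLine ρ).base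
  have hmoebius (ρ) (hρ : ρ ∈ [σ₀, σ₁, σ]) : .C ρ.1 * (1 - .X ^ 3 * (A * x ρ + C)) =
      x ρ - .X * (A * x ρ + C) - .X ^ 2 * (B * x ρ + D) := by
    obtain ⟨hslope, hconst⟩ := hquad ρ hρ
    rw [← hslope, ← hconst]
    exact C_mul_one_sub_X_pow_mul_twistedSLine_slope ρ
  have h₀ := hmoebius σ₀ (by simp)
  have h₁ := hmoebius σ₁ (by simp)
  have h₂ := hmoebius σ (by simp)
  have hx : x σ₀ - x σ₁ ≠ 0 := sub_ne_zero.2 (twistedSLine_base_injective.ne hne)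
  have hden : 1 - .X ^ 3 * (A * x σ + C) ≠ 0 := by
    rw [← (hquad σ (by simp)).1, one_sub_X_pow_mul_twistedSLine_slope]
    exact inv_ne_zero (one_add_X_pow_mul_C_ne_zero three_ne_zero _)
  rw [← hfst] at h₁
  refine RatFunc.C_injective (mul_right_cancel₀ hden (mul_left_cancel₀ hx ?_))
  linear_combination (x σ₀ - x σ₁) * h₂ - (x σ - x σ₁) * h₀ - (x σ₀ - x σ) * h₁

end Twist

/-! ### Rich points in a grid -/

/-- Some of the incidences between the points of a `t × t` grid `A × B` and the lines `y = m x + c`,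
`(m, c) ∈ Λ`, with at most `t` lines through each point. -/
structure GridIncidence (F : Type*) [Field F] (t : ℕ) where
  I : F × F → F × F → Prop
  A : Finset F
  B : Finset F
  Λ : Finset (F × F)
  mem_grid : ∀ x l, I x l → x ∈ A ×ˢ B
  mem_lines : ∀ x l, I x l → l ∈ Λ
  snd_eq : ∀ x l, I x l → x.2 = l.1 * x.1 + l.2
  card_left_le : A.card ≤ t
  card_right_le : B.card ≤ t
  card_lines_le : ∀ x, (Λ.filter (I x)).card ≤ t

theorem sq_card_le_card_mul_card_filter_eq {α β : Type*} {f : α → β} {G : Finset α} {B : Finset β}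
    (hB : ∀ x ∈ G, f x ∈ B) :
    G.card ^ 2 ≤ B.card * ((G ×ˢ G).filter fun q => f q.1 = f q.2).card := by
  have hpairs : ((G ×ˢ G).filter fun q => f q.1 = f q.2).card =
      ∑ b ∈ B, (G.filter fun x => f x = b).card ^ 2 := by
    rw [Finset.card_eq_sum_card_fiberwise (f := fun q => f q.1) (t := B)
      fun q hq => hB _ (Finset.mem_product.1 (Finset.mem_filter.1 hq).1).1]
    refine Finset.sum_congr rfl fun b _ => ?_
    rw [sq, ← Finset.card_product]
    congr 1
    ext q
    simp only [Finset.mem_filter, Finset.mem_product]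
    grind
  rw [hpairs, Finset.card_eq_sum_card_fiberwise hB]
  exact sq_sum_le_card_mul_sum_sq

namespace GridIncidence
variable {F : Type*} [Field F] {t : ℕ} (g : GridIncidence F t)

/-- Pairs of lines give marked incidences: an S-line `(a, m, c)` and a T-line `(a', m', c')` are
marked when some `b` makes `(a', b)` incident to `(m, c)` and `(a, b)` incident to `(m', c')`.
Before the twist the two lines then meet at the point with `x = a`, `y = a'`, `z = b`. -/
def lineConfig : LineConfig (RatFunc F) (F × F × F) (F × F × F) where
  sLine := twistedSLine
  tLine := twistedTLine
  Marked σ τ := ∃ b, g.I (τ.1, b) σ.2 ∧ g.I (σ.1, b) τ.2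
  k := t
  sLine_base_injective := twistedSLine_base_injective
  tLine_base_injective := twistedTLine_base_injective
  meet := by
    rintro ⟨a, m, c⟩ ⟨a', m', c'⟩ ⟨b, hσ, hτ⟩
    exact twistedSLine_meets_twistedTLine ((g.snd_eq _ _ hσ).symm.trans (g.snd_eq _ _ hτ))
  quad A B C D τ S hS := by
    by_cases hinj : Set.InjOn Prod.fst (S : Set (F × F × F))
    · rw [← Finset.card_image_of_injOn hinj]
      refine (Finset.card_le_card (Finset.image_subset_iff.2 fun σ hσ => ?_)).trans g.card_left_le
      obtain ⟨⟨b, -, hb⟩, -⟩ := hS σ hσ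
      exact (Finset.mem_product.1 (g.mem_grid _ _ hb)).1
    · obtain ⟨σ₀, h₀, σ₁, h₁, hfst, hne⟩ : ∃ σ₀ ∈ S, ∃ σ₁ ∈ S, σ₀.1 = σ₁.1 ∧ σ₀ ≠ σ₁ := by
        simpa [Set.InjOn, -Prod.forall] using hinj
      have hconst (σ) (hσ : σ ∈ S) : σ.1 = σ₀.1 := fst_eq_of_twistedSLine_on_quadric hne hfst
        fun ρ hρ => (hS ρ (by aesop)).2
      refine (Finset.card_le_card_of_injOn Prod.snd (fun σ hσ => ?_) fun σ hσ σ' hσ' h =>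
        Prod.ext ((hconst σ hσ).trans (hconst σ' hσ').symm) h).trans
        (g.card_lines_le (τ.1, τ.2.1 * σ₀.1 + τ.2.2))
      obtain ⟨⟨b, hb, hb'⟩, -⟩ := hS σ hσ
      have hb_eq : b = τ.2.1 * σ₀.1 + τ.2.2 := hconst σ hσ ▸ g.snd_eq _ _ hb'
      exact Finset.mem_filter.2 ⟨g.mem_lines _ _ hb, hb_eq ▸ hb⟩

/-- Two points in one row of the grid and a line through each of them give a marked incidence, and
are determined by it. -/
theorem card_mul_sq_le_incidences {G : Finset (F × F)} {D : ℕ}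
    (hG : ∀ x ∈ G, x ∈ g.A ×ˢ g.B ∧ D ≤ (g.Λ.filter (g.I x)).card) :
    ((G ×ˢ G).filter fun q => q.1.2 = q.2.2).card * D ^ 2 ≤
      g.lineConfig.incidences (g.A ×ˢ g.Λ) (g.A ×ˢ g.Λ) := by
  set E := (G ×ˢ G).filter fun q => q.1.2 = q.2.2 with hE
  have hsigma : E.card * D ^ 2 ≤
      (E.sigma fun q => g.Λ.filter (g.I q.1) ×ˢ g.Λ.filter (g.I q.2)).card := by
    rw [Finset.card_sigma, ← smul_eq_mul]
    refine Finset.card_nsmul_le_sum _ _ _ fun q hq => ?_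
    obtain ⟨h₁, h₂⟩ := Finset.mem_product.1 (Finset.mem_filter.1 hq).1
    rw [Finset.card_product, sq]
    exact Nat.mul_le_mul (hG _ h₁).2 (hG _ h₂).2
  rw [LineConfig.incidences, ← Finset.card_sigma]
  refine hsigma.trans (Finset.card_le_card_of_injOn
    (fun w => ⟨(w.1.1.1, w.2.2), (w.1.2.1, w.2.1)⟩) ?_ ?_)
  · rintro ⟨⟨x, x'⟩, l, l'⟩ hw
    simp only [Finset.mem_coe, Finset.mem_sigma, hE, Finset.mem_filter, Finset.mem_product] at hw ⊢
    obtain ⟨⟨⟨hx, hx'⟩, hrow⟩, ⟨hl, hxl⟩, hl', hxl'⟩ := hw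
    have hAx := (Finset.mem_product.1 (hG x hx).1).1
    have hAx' := (Finset.mem_product.1 (hG x' hx').1).1
    exact ⟨⟨hAx, hl'⟩, ⟨hAx', hl⟩, x.2, hxl, hrow ▸ hxl'⟩
  · rintro ⟨⟨x, x'⟩, l, l'⟩ hw ⟨⟨y, y'⟩, m, m'⟩ hw' h
    simp only [Finset.mem_coe, Finset.mem_sigma, Finset.mem_filter, Finset.mem_product] at hw hw'
    simp only [Sigma.mk.injEq, Prod.mk.injEq, heq_eq_eq] at h
    obtain ⟨⟨hxy, rfl⟩, hxy', rfl⟩ := h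
    obtain ⟨-, ⟨-, hxl⟩, -, hxl'⟩ := hw
    obtain ⟨-, ⟨-, hyl⟩, -, hyl'⟩ := hw'
    obtain rfl : x = y := Prod.ext hxy <| by rw [g.snd_eq _ _ hxl, g.snd_eq _ _ hyl, hxy]
    obtain rfl : x' = y' := Prod.ext hxy' <| by rw [g.snd_eq _ _ hxl', g.snd_eq _ _ hyl', hxy']
    rfl

theorem sq_mul_sq_card_le {G : Finset (F × F)} {D r : ℕ}
    (hG : ∀ x ∈ G, x ∈ g.A ×ˢ g.B ∧ D ≤ (g.Λ.filter (g.I x)).card)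
    (hr : t * g.Λ.card ≤ 64 * 4 ^ r) (hd : ∀ d < 3 * 2 ^ r, (d ! : F) ≠ 0) :
    D ^ 2 * G.card ^ 2 ≤ t * (2 ^ 20 * (8 ^ r + t * (r + 1) * 4 ^ r)) := by
  have hcard : (g.A ×ˢ g.Λ).card ≤ 64 * 4 ^ r := by
    rw [Finset.card_product]
    exact (Nat.mul_le_mul_right _ g.card_left_le).trans hr
  have hfactorial : ∀ d < 3 * 2 ^ r, (d ! : RatFunc F) ≠ 0 := fun d hlt => by
    simpa only [map_natCast, map_zero] using (RatFunc.C (K := F)).injective.ne (hd d hlt)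
  have hincidences := g.lineConfig.incidences_le_of_card_le r hfactorial hcard hcard
  have hrows := sq_card_le_card_mul_card_filter_eq (f := Prod.snd) fun x hx =>
    (Finset.mem_product.1 (hG x hx).1).2
  set E := (G ×ˢ G).filter fun q => q.1.2 = q.2.2
  calc D ^ 2 * G.card ^ 2 ≤ D ^ 2 * (g.B.card * E.card) := Nat.mul_le_mul_left _ hrows
    _ = g.B.card * (E.card * D ^ 2) := by ring
    _ ≤ t * (2 ^ 20 * (8 ^ r + t * (r + 1) * 4 ^ r)) :=
      Nat.mul_le_mul g.card_right_le ((g.card_mul_sq_le_incidences hG).trans hincidences)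

end GridIncidence

/-! ### Partial linear spaces -/

section PartialLinear
variable {V W : Type*} {I : V → W → Prop} {P : Finset V} {L : Finset W} {t : ℕ}

/-- The relation `I` between points and lines is the incidence relation of a partial linear space:
two distinct points lie on at most one common line. -/
def IsPartialLinear (I : V → W → Prop) : Prop :=
  ∀ ⦃x y l₁ l₂⦄, x ≠ y → I x l₁ → I y l₁ → I x l₂ → I y l₂ → l₁ = l₂

/-- The points of `P`, other than `q₁` and `q₂`, joined to `q₁` and to `q₂` by two different lines.
-/
def cross (I : V → W → Prop) (P : Finset V) (q₁ q₂ : V) : Finset V :=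
  P.filter fun x => x ≠ q₁ ∧ x ≠ q₂ ∧ ∃ l₁ l₂, l₁ ≠ l₂ ∧ I x l₁ ∧ I x l₂ ∧ I q₁ l₁ ∧ I q₂ l₂

/-- The lines of `L` that are incident to `x` and to at least `K` points of `P`. -/
def heavyLines (I : V → W → Prop) (P : Finset V) (L : Finset W) (K : ℝ) (x : V) : Finset W :=
  L.filter fun l => I x l ∧ K ≤ (P.filter fun y => I y l).card

theorem sum_card_le_sum_card_heavyLines_add {K : ℝ} (hK : 0 ≤ K) :
    (∑ x ∈ P, ((L.filter (I x)).card : ℝ)) ≤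
      ∑ x ∈ P, ((heavyLines I P L K x).card : ℝ) + L.card * K := by
  set d : W → ℕ := fun l => (P.filter fun y => I y l).card
  set light := L.filter fun l => ¬ K ≤ d l with hlight
  have hsplit (x) : ((L.filter (I x)).card : ℝ) =
      (heavyLines I P L K x).card + (light.filter (I x)).card := by
    rw [← Finset.card_filter_add_card_filter_not (s := L.filter (I x)) fun l => K ≤ d l,
      Finset.filter_filter, Finset.filter_comm, ← hlight, Nat.cast_add]
    rfl
  have hcount : (∑ x ∈ P, ((light.filter (I x)).card : ℝ)) = ∑ l ∈ light, (d l : ℝ) :=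
    mod_cast Finset.sum_card_bipartiteAbove_eq_sum_card_bipartiteBelow I
  rw [Finset.sum_congr rfl fun x _ => hsplit x, Finset.sum_add_distrib, hcount]
  gcongr
  calc ∑ l ∈ light, (d l : ℝ) ≤ light.card • K :=
        Finset.sum_le_card_nsmul _ _ _ fun l hl => (not_le.1 (Finset.mem_filter.1 hl).2).le
    _ ≤ L.card * K := by
        rw [nsmul_eq_mul]
        gcongr
        exact Finset.filter_subset _ _

theorem card_mul_sq_le_sum_mul_sub_one {h : V → ℝ} {t : ℝ} (ht : 2 ≤ t)
    (hsum : 3 * (P.card * t) / 4 ≤ ∑ x ∈ P, h x) :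
    P.card * t ^ 2 / 8 ≤ ∑ x ∈ P, h x * (h x - 1) := by
  obtain rfl | hP := P.eq_empty_or_nonempty
  · simp
  have hm : (0 : ℝ) < P.card := mod_cast hP.card_pos
  have hexpand : ∑ x ∈ P, h x * (h x - 1) = ∑ x ∈ P, h x ^ 2 - ∑ x ∈ P, h x := by
    rw [← Finset.sum_sub_distrib]
    exact Finset.sum_congr rfl fun _ _ => by ring
  have hcs : (∑ x ∈ P, h x) ^ 2 ≤ P.card * ∑ x ∈ P, h x ^ 2 := sq_sum_le_card_mul_sum_sq
  rw [hexpand]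
  set s := ∑ x ∈ P, h x
  set m : ℝ := (P.card : ℝ)
  refine le_of_mul_le_mul_left ?_ hm
  have hmt : m * 2 ≤ m * t := by gcongr
  nlinarith [mul_nonneg (sub_nonneg.2 hsum) (by linarith : 0 ≤ s + 3 * (m * t) / 4 - m),
    mul_nonneg (sq_nonneg m) (mul_nonneg (by linarith : 0 ≤ t) (sub_nonneg.2 ht))]

/-- Two heavy lines through `x`, and a further point on each of them, give a pair `q₁, q₂` with `x`
in `cross q₁ q₂`. -/
theorem heavyLines_mul_sq_le_card_filter_mem_cross (hI : IsPartialLinear I) {K : ℝ} (hK : 1 ≤ K)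
    {x : V} (hx : x ∈ P) :
    ((heavyLines I P L K x).card : ℝ) * ((heavyLines I P L K x).card - 1) * (K - 1) ^ 2 ≤
      ((P ×ˢ P).filter fun q => x ∈ cross I P q.1 q.2).card := by
  set H := heavyLines I P L K x with hH
  set R : W → Finset V := fun l => (P.filter fun y => I y l).erase x with hR
  have hinj : (H.offDiag.sigma fun w => R w.1 ×ˢ R w.2).card ≤
      ((P ×ˢ P).filter fun q => x ∈ cross I P q.1 q.2).card := by
    refine Finset.card_le_card_of_injOn (fun w => w.2) ?_ ?_
    · rintro ⟨⟨l₁, l₂⟩, y, z⟩ hw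
      simp only [Finset.mem_coe, Finset.mem_sigma, Finset.mem_offDiag, hH, heavyLines, hR,
        Finset.mem_filter, Finset.mem_product, Finset.mem_erase, cross] at hw ⊢
      grind
    · rintro ⟨⟨l₁, l₂⟩, y, z⟩ hw ⟨⟨m₁, m₂⟩, y', z'⟩ hw' h
      obtain ⟨rfl, rfl⟩ : y = y' ∧ z = z' := Prod.mk.inj h
      simp only [Finset.mem_coe, Finset.mem_sigma, Finset.mem_offDiag, hH, heavyLines, hR,
        Finset.mem_filter, Finset.mem_product, Finset.mem_erase] at hw hw'
      obtain ⟨⟨⟨-, hxl₁, -⟩, ⟨-, hxl₂, -⟩, -⟩, ⟨hyx, -, hyl₁⟩, hzx, -, hzl₂⟩ := hw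
      obtain ⟨⟨⟨-, hxm₁, -⟩, ⟨-, hxm₂, -⟩, -⟩, ⟨-, -, hym₁⟩, -, -, hzm₂⟩ := hw'
      rw [hI hyx hyl₁ hxl₁ hym₁ hxm₁, hI hzx hzl₂ hxl₂ hzm₂ hxm₂]
  have hR_card (l) (hl : l ∈ H) : K - 1 ≤ (R l).card := by
    obtain ⟨-, hxl, hKl⟩ := Finset.mem_filter.1 hl
    have hpoints : (R l).card + 1 = (P.filter fun y => I y l).card :=
      Finset.card_erase_add_one (Finset.mem_filter.2 ⟨hx, hxl⟩)
    rw [← hpoints, Nat.cast_add_one] at hKl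
    linarith
  have hoffDiag : (H.offDiag.card : ℝ) = H.card * (H.card - 1) := by
    rw [Finset.offDiag_card, Nat.cast_sub (Nat.le_mul_self _), Nat.cast_mul]
    ring
  calc (H.card : ℝ) * (H.card - 1) * (K - 1) ^ 2 = H.offDiag.card • (K - 1) ^ 2 := by
        rw [← hoffDiag, nsmul_eq_mul]
    _ ≤ ∑ w ∈ H.offDiag, ((R w.1 ×ˢ R w.2).card : ℝ) := by
        refine Finset.card_nsmul_le_sum _ _ _ fun w hw => ?_
        obtain ⟨h₁, h₂, -⟩ := Finset.mem_offDiag.1 hw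
        rw [Finset.card_product, Nat.cast_mul, sq]
        have hK' := sub_nonneg.2 hK
        exact mul_le_mul (hR_card _ h₁) (hR_card _ h₂) hK' (Nat.cast_nonneg _)
    _ ≤ _ := by
        rw [← Nat.cast_sum, ← Finset.card_sigma]
        exact_mod_cast hinj

theorem pow_four_mul_card_pow_three_le_sum_card_cross (hI : IsPartialLinear I) (ht : 2 ≤ t)
    (hdeg : ∀ x ∈ P, (L.filter (I x)).card = t) (hmt : 8 * L.card ≤ P.card * t) :
    t ^ 4 * P.card ^ 3 ≤ 512 * L.card ^ 2 * ∑ q ∈ P ×ˢ P, (cross I P q.1 q.2).card := by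
  obtain rfl | ⟨x₀, hx₀⟩ := P.eq_empty_or_nonempty
  · simp
  have hn : (0 : ℝ) < L.card := by
    have := (hdeg x₀ hx₀).symm.trans_le (Finset.card_filter_le _ _)
    exact_mod_cast (by lia : 0 < L.card)
  obtain ⟨K, hK⟩ : ∃ K : ℝ, L.card * K = P.card * t / 4 := ⟨_, mul_div_cancel₀ _ hn.ne'⟩
  have hK_two : 2 ≤ K := by
    have : (8 : ℝ) * L.card ≤ P.card * t := mod_cast hmt
    nlinarith
  have hheavy : 3 * (P.card * (t : ℝ)) / 4 ≤ ∑ x ∈ P, ((heavyLines I P L K x).card : ℝ) := by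
    have h := sum_card_le_sum_card_heavyLines_add (I := I) (P := P) (L := L) (by linarith : 0 ≤ K)
    rw [Finset.sum_congr rfl fun x hx => congrArg Nat.cast (hdeg x hx), Finset.sum_const,
      nsmul_eq_mul, hK] at h
    linarith
  have hpairs := card_mul_sq_le_sum_mul_sub_one (by exact_mod_cast ht) hheavy
  have hswap : ∑ x ∈ P, (((P ×ˢ P).filter fun q => x ∈ cross I P q.1 q.2).card : ℝ) =
      ∑ q ∈ P ×ˢ P, ((cross I P q.1 q.2).card : ℝ) := by
    have h := Finset.sum_card_bipartiteAbove_eq_sum_card_bipartiteBelow (s := P) (t := P ×ˢ P)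
      fun x (q : V × V) => x ∈ cross I P q.1 q.2
    have hcross (q : V × V) : (P.filter fun x => x ∈ cross I P q.1 q.2) = cross I P q.1 q.2 := by
      rw [Finset.filter_mem_eq_inter, Finset.inter_eq_right]
      exact Finset.filter_subset _ _
    simp only [Finset.bipartiteAbove, Finset.bipartiteBelow, hcross] at h
    exact_mod_cast h
  have hsum : P.card * (t : ℝ) ^ 2 / 8 * (K / 2) ^ 2 ≤
      ∑ q ∈ P ×ˢ P, ((cross I P q.1 q.2).card : ℝ) := by
    rw [← hswap]
    refine le_trans ?_ (Finset.sum_le_sum fun x hx =>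
      heavyLines_mul_sq_le_card_filter_mem_cross (L := L) hI (by linarith : 1 ≤ K) hx)
    rw [← Finset.sum_mul]
    exact mul_le_mul hpairs (by gcongr; linarith) (by positivity)
      (le_trans (by positivity) hpairs)
  have hreal : (t : ℝ) ^ 4 * P.card ^ 3 ≤
      512 * L.card ^ 2 * ∑ q ∈ P ×ˢ P, ((cross I P q.1 q.2).card : ℝ) :=
    calc (t : ℝ) ^ 4 * P.card ^ 3 = 16 * P.card * t ^ 2 * (P.card * t / 4) ^ 2 := by ring
      _ = 512 * L.card ^ 2 * (P.card * (t : ℝ) ^ 2 / 8 * (K / 2) ^ 2) := by rw [← hK]; ring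
      _ ≤ _ := by gcongr
  exact_mod_cast hreal

theorem exists_le_card_cross (hI : IsPartialLinear I) (hP : P.Nonempty) (ht : 2 ≤ t)
    (hdeg : ∀ x ∈ P, (L.filter (I x)).card = t) (hmt : 8 * L.card ≤ P.card * t) :
    ∃ q₁ ∈ P, ∃ q₂ ∈ P, t ^ 4 * P.card ≤ 512 * L.card ^ 2 * (cross I P q₁ q₂).card := by
  obtain ⟨q, hq, hle⟩ := Finset.exists_le_of_sum_le (s := P ×ˢ P) (f := fun _ => t ^ 4 * P.card)
    (g := fun q => 512 * L.card ^ 2 * (cross I P q.1 q.2).card) (hP.product hP) <| by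
      rw [Finset.sum_const, Finset.card_product, smul_eq_mul, ← Finset.mul_sum]
      refine le_trans (le_of_eq ?_) (pow_four_mul_card_pow_three_le_sum_card_cross hI ht hdeg hmt)
      ring
  exact ⟨q.1, (Finset.mem_product.1 hq).1, q.2, (Finset.mem_product.1 hq).2, hle⟩

theorem card_mul_sq_le (hI : IsPartialLinear I) (hdeg : ∀ x ∈ P, (L.filter (I x)).card = t) :
    P.card * t ^ 2 ≤ L.card * (t + P.card) := by
  obtain rfl | hP := P.eq_empty_or_nonempty
  · simp
  have hincidences : ∑ l ∈ L, (P.filter fun x => I x l).card = P.card * t := by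
    rw [← smul_eq_mul, ← Finset.sum_const, ← Finset.sum_congr rfl hdeg]
    exact (Finset.sum_card_bipartiteAbove_eq_sum_card_bipartiteBelow I).symm
  have hpairs : ∑ l ∈ L, (P.filter fun x => I x l).card ^ 2 =
      ∑ x ∈ P, ∑ y ∈ P, (L.filter fun l => I x l ∧ I y l).card := by
    rw [← Finset.sum_product' P P fun x y => (L.filter fun l => I x l ∧ I y l).card]
    refine Eq.trans ?_ (Finset.sum_card_bipartiteAbove_eq_sum_card_bipartiteBelow
      fun (q : V × V) l => I q.1 l ∧ I q.2 l).symm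
    refine Finset.sum_congr rfl fun l _ => ?_
    rw [sq, ← Finset.card_product, Finset.bipartiteBelow, ← Finset.filter_product]
  have hjoin (x) (hx : x ∈ P) : ∑ y ∈ P, (L.filter fun l => I x l ∧ I y l).card ≤ t + P.card := by
    rw [← Finset.add_sum_erase _ _ hx]
    simp only [and_self]
    refine Nat.add_le_add (hdeg x hx).le (le_trans (Finset.sum_le_card_nsmul _ _ 1 fun y hy => ?_)
      ((smul_eq_mul _ _).trans_le ((mul_one _).trans_le Finset.card_erase_le)))
    refine Finset.card_le_one.2 fun l hl l' hl' => ?_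
    obtain ⟨-, hxl, hyl⟩ := Finset.mem_filter.1 hl
    obtain ⟨-, hxl', hyl'⟩ := Finset.mem_filter.1 hl'
    exact hI (Finset.ne_of_mem_erase hy).symm hxl hyl hxl' hyl'
  refine Nat.le_of_mul_le_mul_left ?_ hP.card_pos
  calc P.card * (P.card * t ^ 2) = (∑ l ∈ L, (P.filter fun x => I x l).card) ^ 2 := by
        rw [hincidences]; ring
    _ ≤ L.card * ∑ l ∈ L, (P.filter fun x => I x l).card ^ 2 := sq_sum_le_card_mul_sum_sq
    _ ≤ L.card * (P.card * (t + P.card)) := by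
        rw [hpairs, ← smul_eq_mul P.card]
        exact Nat.mul_le_mul_left _ (Finset.sum_le_card_nsmul _ _ _ hjoin)
    _ = P.card * (L.card * (t + P.card)) := by ring

end PartialLinear

theorem cross_self {V W : Type*} {I : V → W → Prop} (hI : IsPartialLinear I) (P : Finset V)
    (q : V) : cross I P q q = ∅ :=
  Finset.filter_eq_empty_iff.2 fun _ _ ⟨hne, _, _, _, hl, h₁, h₂, hq₁, hq₂⟩ =>
    hl (hI hne h₁ hq₁ h₂ hq₂)

/-! ### A projective map from crossed pairs of points to grids -/

/-- A realization of the incidence relation `I` in the affine plane over `F`: `x` is the point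
`pt x`, and `l` is the line `s l + A l * ξ + B l * η = 0`. -/
structure Realization {V W : Type*} (I : V → W → Prop) (F : Type*) [Field F] where
  pt : V → F × F
  s : W → F
  A : W → F
  B : W → F
  pt_injective : Function.Injective pt
  equation : ∀ x l, I x l → s l + A l * (pt x).1 + B l * (pt x).2 = 0
  eq_of_proportional : ∀ l l', s l * A l' = s l' * A l → s l * B l' = s l' * B l →
    A l * B l' = A l' * B l → l = l'

namespace Realization
variable {V W F : Type*} [Field F] {I : V → W → Prop} (R : Realization I F)

/-- The realization of a smaller incidence relation by the same points and lines. -/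
def mono {J : V → W → Prop} (h : ∀ x l, J x l → I x l) : Realization J F :=
  { R with equation := fun x l hJ => R.equation x l (h x l hJ) }

theorem isPartialLinear (R : Realization I F) : IsPartialLinear I := by
  intro x y l l' hxy hxl hyl hxl' hyl'
  have hx := R.equation x l hxl
  have hy := R.equation y l hyl
  have hx' := R.equation x l' hxl'
  have hy' := R.equation y l' hyl'
  have hAB : R.A l * R.B l' = R.A l' * R.B l := by
    have hne : (R.pt x).1 - (R.pt y).1 ≠ 0 ∨ (R.pt x).2 - (R.pt y).2 ≠ 0 := by
      rw [ne_eq, ne_eq, ← not_and_or, sub_eq_zero, sub_eq_zero, ← Prod.ext_iff]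
      exact R.pt_injective.ne hxy
    rcases hne with hne | hne <;> apply mul_right_cancel₀ hne
    · linear_combination R.B l' * (hx - hy) - R.B l * (hx' - hy')
    · linear_combination R.A l * (hx' - hy') - R.A l' * (hx - hy)
  refine R.eq_of_proportional l l' ?_ ?_ hAB
  · linear_combination R.A l' * hx - R.A l * hx' + (R.pt x).2 * hAB
  · linear_combination R.B l' * hx - R.B l * hx' - (R.pt x).1 * hAB

theorem eq_of_eq_zero {l : W} (hs : R.s l = 0) (hA : R.A l = 0) (hB : R.B l = 0) (l' : W) :
    l = l' :=
  R.eq_of_proportional l l' (by simp [hs, hA]) (by simp [hs, hB]) (by simp [hA, hB])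

theorem exists_pt_eq (R : Realization I F) {q₁ q₂ : V} (hq : q₁ ≠ q₂) :
    ∃ R' : Realization I F, R'.pt q₁ = (0, 0) ∧ R'.pt q₂ = (1, 0) := by
  rcases hpt₁ : R.pt q₁ with ⟨a, b⟩
  set w₀ := (R.pt q₂).1 - a with hw₀
  set w₁ := (R.pt q₂).2 - b with hw₁
  obtain ⟨e₀, e₁, he⟩ : ∃ e₀ e₁, e₀ * w₀ + e₁ * w₁ = 1 := by
    by_cases h₀ : w₀ = 0
    · have h₁ : w₁ ≠ 0 := fun h₁ => hq <| R.pt_injective <| hpt₁.trans <|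
        Prod.ext (sub_eq_zero.1 h₀).symm (sub_eq_zero.1 h₁).symm
      exact ⟨0, w₁⁻¹, by rw [inv_mul_cancel₀ h₁]; ring⟩
    · exact ⟨w₀⁻¹, 0, by rw [inv_mul_cancel₀ h₀]; ring⟩
  refine ⟨{
    pt x := (e₀ * ((R.pt x).1 - a) + e₁ * ((R.pt x).2 - b),
      w₁ * ((R.pt x).1 - a) - w₀ * ((R.pt x).2 - b))
    s l := R.s l + R.A l * a + R.B l * b
    A l := R.A l * w₀ + R.B l * w₁
    B l := R.A l * e₁ - R.B l * e₀
    pt_injective x y hxy := ?_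
    equation x l hxl := ?_
    eq_of_proportional l l' hsA hsB hAB := ?_ }, ?_, ?_⟩
  · obtain ⟨h₁, h₂⟩ := Prod.mk.inj hxy
    refine R.pt_injective (Prod.ext ?_ ?_)
    · linear_combination w₀ * h₁ + e₁ * h₂ - ((R.pt x).1 - (R.pt y).1) * he
    · linear_combination w₁ * h₁ - e₀ * h₂ - ((R.pt x).2 - (R.pt y).2) * he
  · linear_combination R.equation x l hxl +
      (R.A l * ((R.pt x).1 - a) + R.B l * ((R.pt x).2 - b)) * he
  · have hAB' : R.A l * R.B l' = R.A l' * R.B l := by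
      linear_combination -hAB - (R.A l * R.B l' - R.A l' * R.B l) * he
    refine R.eq_of_proportional l l' ?_ ?_ hAB'
    · linear_combination e₀ * hsA + w₁ * hsB + b * hAB' - (R.s l * R.A l' - R.s l' * R.A l +
        b * (R.B l * R.A l' - R.B l' * R.A l)) * he
    · linear_combination e₁ * hsA - w₀ * hsB - a * hAB' - (R.s l * R.B l' - R.s l' * R.B l +
        a * (R.A l * R.B l' - R.A l' * R.B l)) * he
  · simp [hpt₁]
  · refine Prod.ext he ?_
    simp only [← hw₀, ← hw₁]
    ring

/-- The image of the point `(ξ, η)` under the projective map that sends `(0, 0)` and `(1, 0)` to the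
points at infinity in the vertical and in the horizontal direction. -/
def proj (x : V) : F × F :=
  ((R.pt x).1 / (R.pt x).2, ((R.pt x).1 - 1) / (R.pt x).2)

/-- Slope and intercept of the image under `proj` of a line that avoids `(0, 0)`, that is, with
`s l ≠ 0`. -/
def slopeIntercept (l : W) : F × F :=
  ((R.s l + R.A l) / R.s l, R.B l / R.s l)

theorem proj_injOn : Set.InjOn R.proj {x | (R.pt x).2 ≠ 0} := by
  intro x hx y hy h
  rw [Set.mem_ofPred_eq] at hx hy
  obtain ⟨h₁, h₂⟩ := Prod.mk.inj h
  rw [div_eq_div_iff hx hy] at h₁ h₂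
  have hη : (R.pt x).2 = (R.pt y).2 := by linear_combination h₂ - h₁
  refine R.pt_injective (Prod.ext (mul_right_cancel₀ hy ?_) hη)
  rw [h₁, hη]

theorem slopeIntercept_injOn : Set.InjOn R.slopeIntercept {l | R.s l ≠ 0} := by
  intro l hl l' hl' h
  rw [Set.mem_ofPred_eq] at hl hl'
  obtain ⟨h₁, h₂⟩ := Prod.mk.inj h
  rw [div_eq_div_iff hl hl'] at h₁ h₂
  have hA : R.A l * R.s l' = R.A l' * R.s l := by linear_combination h₁
  refine R.eq_of_proportional l l' (by linear_combination -hA) (by linear_combination -h₂)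
    (mul_right_cancel₀ hl ?_)
  linear_combination R.B l * hA - R.A l * h₂

theorem proj_snd_eq {x : V} {l : W} (hx : (R.pt x).2 ≠ 0) (hl : R.s l ≠ 0) (hxl : I x l) :
    (R.proj x).2 = (R.slopeIntercept l).1 * (R.proj x).1 + (R.slopeIntercept l).2 := by
  have h := R.equation x l hxl
  simp only [proj, slopeIntercept]
  field_simp
  linear_combination -h

section Cross
variable {q₁ q₂ x : V} {P : Finset V} {L : Finset W} {t : ℕ}

theorem s_eq_zero (h₁ : R.pt q₁ = (0, 0)) {l : W} (hl : I q₁ l) : R.s l = 0 := by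
  simpa [h₁] using R.equation q₁ l hl

theorem s_add_A_eq_zero (h₂ : R.pt q₂ = (1, 0)) {l : W} (hl : I q₂ l) : R.s l + R.A l = 0 := by
  simpa [h₂] using R.equation q₂ l hl

theorem pt_snd_ne_zero_of_mem_cross (h₁ : R.pt q₁ = (0, 0)) (h₂ : R.pt q₂ = (1, 0))
    (hx : x ∈ cross I P q₁ q₂) : (R.pt x).2 ≠ 0 := by
  intro hη
  obtain ⟨-, hxq₁, hxq₂, l₁, l₂, hne, hxl₁, hxl₂, hl₁, hl₂⟩ := Finset.mem_filter.1 hx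
  have hξ₁ : (R.pt x).1 ≠ 0 := fun h => hxq₁ <| R.pt_injective <| h₁ ▸ Prod.ext h hη
  have hξ₂ : (R.pt x).1 - 1 ≠ 0 := fun h => hxq₂ <| R.pt_injective <|
    h₂ ▸ Prod.ext (sub_eq_zero.1 h) hη
  have hs₁ := R.s_eq_zero h₁ hl₁
  have hs₂ := R.s_add_A_eq_zero h₂ hl₂
  have hA₁ : R.A l₁ = 0 := by
    apply mul_right_cancel₀ hξ₁
    linear_combination R.equation x l₁ hxl₁ - hs₁ - R.B l₁ * hη
  have hA₂ : R.A l₂ = 0 := by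
    apply mul_right_cancel₀ hξ₂
    linear_combination R.equation x l₂ hxl₂ - hs₂ - R.B l₂ * hη
  have hs₂' : R.s l₂ = 0 := by linear_combination hs₂ - hA₂
  exact hne (R.eq_of_proportional l₁ l₂ (by simp [hs₁, hs₂']) (by simp [hs₁, hs₂'])
    (by simp [hA₁, hA₂]))

theorem exists_neg_div_eq_proj (h₁ : R.pt q₁ = (0, 0)) (h₂ : R.pt q₂ = (1, 0))
    (hx : x ∈ cross I P q₁ q₂) :
    (∃ l, I q₁ l ∧ -R.B l / R.A l = (R.proj x).1) ∧
      ∃ l, I q₂ l ∧ -R.B l / R.A l = (R.proj x).2 := by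
  have hη := R.pt_snd_ne_zero_of_mem_cross h₁ h₂ hx
  obtain ⟨-, -, -, l₁, l₂, hne, hxl₁, hxl₂, hl₁, hl₂⟩ := Finset.mem_filter.1 hx
  have hs₁ := R.s_eq_zero h₁ hl₁
  have hs₂ := R.s_add_A_eq_zero h₂ hl₂
  have heq₁ := R.equation x l₁ hxl₁
  have heq₂ := R.equation x l₂ hxl₂
  refine ⟨⟨l₁, hl₁, ?_⟩, l₂, hl₂, ?_⟩
  · have hA : R.A l₁ ≠ 0 := fun hA => hne <| R.eq_of_eq_zero hs₁ hA
      (mul_right_cancel₀ hη (by linear_combination heq₁ - hs₁ - (R.pt x).1 * hA)) l₂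
    rw [proj, div_eq_div_iff hA hη]
    linear_combination hs₁ - heq₁
  · have hA : R.A l₂ ≠ 0 := fun hA => hne <| Eq.symm <| R.eq_of_eq_zero
      (by linear_combination hs₂ - hA) hA
      (mul_right_cancel₀ hη (by linear_combination heq₂ - hs₂ - ((R.pt x).1 - 1) * hA)) l₁
    rw [proj, div_eq_div_iff hA hη]
    linear_combination hs₂ - heq₂

/-- The incidences between the points of `cross I P q₁ q₂` and the lines with `s l ≠ 0`, which for
`q₁ = (0, 0)` are the lines that avoid `q₁`, after the projective map. -/
def projIncidence (P : Finset V) (q₁ q₂ : V) (u k : F × F) : Prop :=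
  ∃ x ∈ cross I P q₁ q₂, ∃ l, I x l ∧ R.s l ≠ 0 ∧ R.proj x = u ∧ R.slopeIntercept l = k

theorem proj_mem_product (h₁ : R.pt q₁ = (0, 0)) (h₂ : R.pt q₂ = (1, 0))
    (hL : ∀ x l, I x l → l ∈ L) (hx : x ∈ cross I P q₁ q₂) :
    R.proj x ∈ (L.filter (I q₁)).image (fun l => -R.B l / R.A l) ×ˢ
      (L.filter (I q₂)).image fun l => -R.B l / R.A l := by
  obtain ⟨⟨l₁, hl₁, hfst⟩, l₂, hl₂, hsnd⟩ := R.exists_neg_div_eq_proj h₁ h₂ hx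
  exact Finset.mem_product.2
    ⟨Finset.mem_image.2 ⟨l₁, Finset.mem_filter.2 ⟨hL _ _ hl₁, hl₁⟩, hfst⟩,
      Finset.mem_image.2 ⟨l₂, Finset.mem_filter.2 ⟨hL _ _ hl₂, hl₂⟩, hsnd⟩⟩

theorem card_filter_projIncidence_le (h₁ : R.pt q₁ = (0, 0)) (h₂ : R.pt q₂ = (1, 0))
    (hL : ∀ x l, I x l → l ∈ L) (hdeg : ∀ x ∈ P, (L.filter (I x)).card ≤ t) (Λ : Finset (F × F))
    (u : F × F) : (Λ.filter (R.projIncidence P q₁ q₂ u)).card ≤ t := by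
  by_cases hu : ∃ x ∈ cross I P q₁ q₂, R.proj x = u
  · obtain ⟨x, hx, rfl⟩ := hu
    refine le_trans (Finset.card_le_card fun k hk => ?_) <|
      (Finset.card_image_le (f := R.slopeIntercept)).trans (hdeg x (Finset.filter_subset _ _ hx))
    obtain ⟨x', hx', l, hxl, -, hproj, rfl⟩ := (Finset.mem_filter.1 hk).2
    obtain rfl : x' = x := R.proj_injOn (R.pt_snd_ne_zero_of_mem_cross h₁ h₂ hx')
      (R.pt_snd_ne_zero_of_mem_cross h₁ h₂ hx) hproj
    exact Finset.mem_image_of_mem _ (Finset.mem_filter.2 ⟨hL _ _ hxl, hxl⟩)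
  · rw [Finset.filter_eq_empty_iff.2 fun k _ ⟨x, hx, _, _, _, hproj, _⟩ => hu ⟨x, hx, hproj⟩]
    exact Nat.zero_le t

/-- Only the line through `x` and `q₁` is lost under the projective map. -/
theorem card_filter_sub_one_le_card_filter_projIncidence (h₁ : R.pt q₁ = (0, 0))
    (h₂ : R.pt q₂ = (1, 0)) (hx : x ∈ cross I P q₁ q₂) :
    (L.filter (I x)).card - 1 ≤
      ((L.image R.slopeIntercept).filter (R.projIncidence P q₁ q₂ (R.proj x))).card := by
  have hη := R.pt_snd_ne_zero_of_mem_cross h₁ h₂ hx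
  obtain ⟨-, -, -, l₁, l₂, -, hxl₁, -, hl₁, -⟩ := Finset.mem_filter.1 hx
  have hs₁ := R.s_eq_zero h₁ hl₁
  have hs : ∀ l ∈ (L.filter (I x)).erase l₁, R.s l ≠ 0 := by
    intro l hl hs
    obtain ⟨hne, hl⟩ := Finset.mem_erase.1 hl
    have heq := R.equation x l (Finset.mem_filter.1 hl).2
    have heq₁ := R.equation x l₁ hxl₁
    rw [hs, zero_add] at heq
    rw [hs₁, zero_add] at heq₁
    refine hne (R.eq_of_proportional l l₁ (by simp [hs, hs₁]) (by simp [hs, hs₁])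
      (mul_right_cancel₀ hη ?_))
    linear_combination R.A l * heq₁ - R.A l₁ * heq
  calc (L.filter (I x)).card - 1 ≤ ((L.filter (I x)).erase l₁).card :=
        Finset.pred_card_le_card_erase
    _ = (((L.filter (I x)).erase l₁).image R.slopeIntercept).card :=
        (Finset.card_image_of_injOn (R.slopeIntercept_injOn.mono hs)).symm
    _ ≤ _ := by
        refine Finset.card_le_card (Finset.image_subset_iff.2 fun l hl => ?_)
        obtain ⟨hlL, hxl⟩ := Finset.mem_filter.1 (Finset.mem_of_mem_erase hl)
        exact Finset.mem_filter.2
          ⟨Finset.mem_image_of_mem _ hlL, x, hx, l, hxl, hs l hl, rfl, rfl⟩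

/-- The lines through `q₁ = (0, 0)` and through `q₂ = (1, 0)` become the two directions of a grid.
-/
def gridIncidence (h₁ : R.pt q₁ = (0, 0)) (h₂ : R.pt q₂ = (1, 0)) (hL : ∀ x l, I x l → l ∈ L)
    (hdeg : ∀ x ∈ P, (L.filter (I x)).card ≤ t) (hq₁ : q₁ ∈ P) (hq₂ : q₂ ∈ P) :
    GridIncidence F t where
  I := R.projIncidence P q₁ q₂
  A := (L.filter (I q₁)).image fun l => -R.B l / R.A l
  B := (L.filter (I q₂)).image fun l => -R.B l / R.A l
  Λ := L.image R.slopeIntercept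
  mem_grid := by
    rintro _ _ ⟨x, hx, -, -, -, rfl, -⟩
    exact R.proj_mem_product h₁ h₂ hL hx
  mem_lines := by
    rintro _ _ ⟨x, -, l, hxl, -, -, rfl⟩
    exact Finset.mem_image_of_mem _ (hL x l hxl)
  snd_eq := by
    rintro _ _ ⟨x, hx, l, hxl, hs, rfl, rfl⟩
    exact R.proj_snd_eq (R.pt_snd_ne_zero_of_mem_cross h₁ h₂ hx) hs hxl
  card_left_le := Finset.card_image_le.trans (hdeg q₁ hq₁)
  card_right_le := Finset.card_image_le.trans (hdeg q₂ hq₂)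
  card_lines_le := R.card_filter_projIncidence_le h₁ h₂ hL hdeg _

theorem sq_mul_sq_card_cross_le (R : Realization I F) (hL : ∀ x l, I x l → l ∈ L)
    (hdeg : ∀ x ∈ P, (L.filter (I x)).card = t) (hq₁ : q₁ ∈ P) (hq₂ : q₂ ∈ P) {r : ℕ}
    (hr : t * L.card ≤ 64 * 4 ^ r) (hd : ∀ d < 3 * 2 ^ r, (d ! : F) ≠ 0) :
    (t - 1) ^ 2 * (cross I P q₁ q₂).card ^ 2 ≤
      t * (2 ^ 20 * (8 ^ r + t * (r + 1) * 4 ^ r)) := by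
  obtain rfl | hq := eq_or_ne q₁ q₂
  · simp [cross_self R.isPartialLinear]
  obtain ⟨R', h₁, h₂⟩ := R.exists_pt_eq hq
  have hinj : Set.InjOn R'.proj (cross I P q₁ q₂) :=
    R'.proj_injOn.mono fun x hx => R'.pt_snd_ne_zero_of_mem_cross h₁ h₂ hx
  rw [← Finset.card_image_of_injOn hinj]
  refine (R'.gridIncidence h₁ h₂ hL (fun x hx => (hdeg x hx).le) hq₁ hq₂).sq_mul_sq_card_le
    (Finset.forall_mem_image.2 fun x hx => ⟨R'.proj_mem_product h₁ h₂ hL hx, ?_⟩)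
    ((Nat.mul_le_mul_left t Finset.card_image_le).trans hr) hd
  exact (congrArg (· - 1) (hdeg x (Finset.filter_subset _ _ hx))).ge.trans
    (R'.card_filter_sub_one_le_card_filter_projIncidence h₁ h₂ hx)

end Cross
end Realization

/-! ### The bound for realizable incidence relations -/

theorem add_one_pow_three_le (r : ℕ) : (r + 1) ^ 3 ≤ 8 * 2 ^ r := by
  induction r using Nat.strong_induction_on with
  | _ r ih =>
    obtain hr | ⟨k, rfl⟩ : r < 4 ∨ ∃ k, r = k + 1 + 3 :=
      (lt_or_ge r 4).imp_right fun h => ⟨r - 4, by lia⟩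
    · interval_cases r <;> norm_num
    · have h := ih (k + 3) (by lia)
      calc (k + 1 + 3 + 1) ^ 3 ≤ 2 * (k + 3 + 1) ^ 3 := by ring_nf; lia
        _ ≤ 2 * (8 * 2 ^ (k + 3)) := Nat.mul_le_mul_left 2 h
        _ = 8 * 2 ^ (k + 1 + 3) := by ring

theorem exists_scale {n t : ℕ} (hn : 4 ≤ n) (ht : 2 ≤ t) (htn : t ^ 2 ≤ 2 * n) :
    ∃ r, t * n ≤ 64 * 4 ^ r ∧ 4 ^ r ≤ t * n ∧ ∀ p, n ^ 3 ≤ p ^ 4 → 3 * 2 ^ r ≤ p := by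
  have hpos : t * n ≠ 0 := by positivity
  have hlt : t * n < 4 ^ (Nat.log 4 (t * n) + 1) := Nat.lt_pow_succ_log_self (by norm_num) _
  have hle : 4 ^ Nat.log 4 (t * n) ≤ t * n := Nat.pow_log_le_self 4 hpos
  generalize Nat.log 4 (t * n) = k at hlt hle
  obtain hk | ⟨r, rfl⟩ : k ≤ 2 ∨ ∃ r, k = r + 2 :=
    (le_total k 2).imp_right fun h => ⟨k - 2, by lia⟩
  · refine ⟨0, ?_, Nat.one_le_iff_ne_zero.2 hpos, fun p hp => ?_⟩
    · have := Nat.pow_le_pow_right (n := 4) (by norm_num) (by lia : k + 1 ≤ 3)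
      lia
    · by_contra! hlt
      have hp_le : p ^ 4 ≤ 2 ^ 4 := Nat.pow_le_pow_left (by lia) 4
      have hn_le : 4 ^ 3 ≤ n ^ 3 := Nat.pow_le_pow_left hn 3
      lia
  · refine ⟨r, by lia, by lia, fun p hp => le_of_pow_le_pow_left₀ four_ne_zero p.zero_le ?_⟩
    have h₄ : 4 ^ r = (2 ^ r) ^ 2 := by rw [← pow_mul, mul_comm, pow_mul]; norm_num
    rw [pow_add, h₄] at hle
    generalize 2 ^ r = a at *
    refine (Nat.le_of_mul_le_mul_left ?_ two_pos).trans hp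
    calc 2 * (3 * a) ^ 4 ≤ (a ^ 2 * 4 ^ 2) ^ 2 := by ring_nf; lia
      _ ≤ (t * n) ^ 2 := Nat.pow_le_pow_left hle 2
      _ = t ^ 2 * n ^ 2 := mul_pow t n 2
      _ ≤ 2 * n * n ^ 2 := Nat.mul_le_mul_right _ htn
      _ = 2 * n ^ 3 := by ring

theorem pow_four_le_of_grid_bound {n t r g : ℕ} (ht : 2 ≤ t) (htn : t ^ 2 ≤ 2 * n)
    (hle : t * n ≤ 64 * 4 ^ r) (hge : 4 ^ r ≤ t * n)
    (hg : (t - 1) ^ 2 * g ^ 2 ≤ t * (2 ^ 20 * (8 ^ r + t * (r + 1) * 4 ^ r))) :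
    g ^ 4 ≤ 2 ^ 52 * (t * n ^ 3) := by
  have hr := add_one_pow_three_le r
  have h₄ : 4 ^ r = (2 ^ r) ^ 2 := by rw [← pow_mul, mul_comm, pow_mul]; norm_num
  have h₈ : 8 ^ r = (2 ^ r) ^ 3 := by rw [← pow_mul, mul_comm, pow_mul]; norm_num
  rw [h₄] at hle hge
  rw [h₄, h₈] at hg
  generalize 2 ^ r = a at *
  have ht_cube : t ^ 3 ≤ 128 * a ^ 2 := by nlinarith
  have htr : t * (r + 1) ≤ 11 * a := by
    refine le_of_pow_le_pow_left₀ three_ne_zero (Nat.zero_le _) ?_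
    calc (t * (r + 1)) ^ 3 = t ^ 3 * (r + 1) ^ 3 := by ring
      _ ≤ 128 * a ^ 2 * (8 * a) := Nat.mul_le_mul ht_cube hr
      _ ≤ (11 * a) ^ 3 := by ring_nf; lia
  have hg_sq : t * g ^ 2 ≤ 2 ^ 26 * a ^ 3 := by
    have ht_sq : t ^ 2 ≤ (2 * (t - 1)) ^ 2 := Nat.pow_le_pow_left (by lia) 2
    refine Nat.le_of_mul_le_mul_left ?_ (by lia : 0 < t)
    calc t * (t * g ^ 2) = t ^ 2 * g ^ 2 := by ring
      _ ≤ (2 * (t - 1)) ^ 2 * g ^ 2 := Nat.mul_le_mul_right _ ht_sq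
      _ = 4 * ((t - 1) ^ 2 * g ^ 2) := by ring
      _ ≤ 4 * (t * (2 ^ 20 * (a ^ 3 + t * (r + 1) * a ^ 2))) := Nat.mul_le_mul_left 4 hg
      _ ≤ 4 * (t * (2 ^ 20 * (a ^ 3 + 11 * a * a ^ 2))) := by gcongr
      _ ≤ t * (2 ^ 26 * a ^ 3) := by ring_nf; lia
  refine Nat.le_of_mul_le_mul_left ?_ (by positivity : 0 < t ^ 2)
  calc t ^ 2 * g ^ 4 = (t * g ^ 2) ^ 2 := by ring
    _ ≤ (2 ^ 26 * a ^ 3) ^ 2 := Nat.pow_le_pow_left hg_sq 2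
    _ = 2 ^ 52 * (a ^ 2) ^ 3 := by ring
    _ ≤ 2 ^ 52 * (t * n) ^ 3 := by gcongr
    _ = t ^ 2 * (2 ^ 52 * (t * n ^ 3)) := by ring

theorem factorial_cast_ne_zero {F : Type*} [Field F] {p : ℕ} [CharP F p] {d : ℕ}
    (hd : p ≠ 0 → d < p) : (d ! : F) ≠ 0 := by
  obtain hp | rfl := CharP.char_is_prime_or_zero F p
  · have : Fact p.Prime := ⟨hp⟩
    exact ((IsUnit.natCast_factorial_iff_of_charP p).2 (hd hp.ne_zero)).ne_zero
  · have := CharP.charP_to_charZero F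
    exact_mod_cast d.factorial_ne_zero

theorem exists_subrelation_card_filter_eq {V W : Type*} {I : V → W → Prop} {P : Finset V}
    {L : Finset W} {t : ℕ} (hP : ∀ x ∈ P, t ≤ (L.filter (I x)).card) :
    ∃ J : V → W → Prop, (∀ x l, J x l → I x l) ∧ (∀ x l, J x l → l ∈ L) ∧
      ∀ x ∈ P, (L.filter (J x)).card = t := by
  choose! M hsub hcard using fun x hx => Finset.exists_subset_card_eq (hP x hx)
  have hmem {x l} (h : x ∈ P ∧ l ∈ M x) : l ∈ L ∧ I x l :=
    Finset.mem_filter.1 (hsub x h.1 h.2)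
  refine ⟨fun x l => x ∈ P ∧ l ∈ M x, fun x l h => (hmem h).2, fun x l h => (hmem h).1,
    fun x hx => ?_⟩
  rw [← hcard x hx]
  refine congrArg _ (Finset.ext fun l => ?_)
  simp only [Finset.mem_filter]
  exact ⟨fun h => h.2.2, fun h => ⟨(hmem ⟨hx, h⟩).1, hx, h⟩⟩

namespace Realization
variable {V W F : Type*} [Field F] {I : V → W → Prop} {P : Finset V} {L : Finset W} {t : ℕ}

theorem pow_mul_card_pow_four_le (R : Realization I F) (p : ℕ) [CharP F p]
    (hL : ∀ x l, I x l → l ∈ L) (hdeg : ∀ x ∈ P, (L.filter (I x)).card = t) (ht : 2 ≤ t)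
    (hmt : 8 * L.card ≤ P.card * t) (hp : p ≠ 0 → L.card ^ 3 ≤ p ^ 4) :
    t ^ 15 * P.card ^ 4 ≤ 2 ^ 88 * L.card ^ 11 := by
  obtain rfl | hP := P.eq_empty_or_nonempty
  · simp
  have htn : 7 * t ^ 2 ≤ 8 * L.card := by
    have hpairs := card_mul_sq_le R.isPartialLinear hdeg
    have := hP.card_pos
    refine Nat.le_of_mul_le_mul_left ?_ this
    nlinarith
  obtain ⟨r, hle, hge, hscale⟩ := exists_scale (n := L.card) (by nlinarith) ht (by lia)
  obtain ⟨q₁, hq₁, q₂, hq₂, hcross⟩ := exists_le_card_cross R.isPartialLinear hP ht hdeg hmt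
  have hcross_le := pow_four_le_of_grid_bound ht (by lia) hle hge <|
    R.sq_mul_sq_card_cross_le hL hdeg hq₁ hq₂ hle fun d hd =>
      factorial_cast_ne_zero (p := p) fun hp₀ => hd.trans_le (hscale p (hp hp₀))
  set g := (cross I P q₁ q₂).card
  set n := L.card
  refine Nat.le_of_mul_le_mul_left ?_ (by lia : 0 < t)
  calc t * (t ^ 15 * P.card ^ 4) = (t ^ 4 * P.card) ^ 4 := by ring
    _ ≤ (512 * n ^ 2 * g) ^ 4 := Nat.pow_le_pow_left hcross 4
    _ = 2 ^ 36 * n ^ 8 * g ^ 4 := by ring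
    _ ≤ 2 ^ 36 * n ^ 8 * (2 ^ 52 * (t * n ^ 3)) := Nat.mul_le_mul_left _ hcross_le
    _ = t * (2 ^ 88 * n ^ 11) := by ring

theorem card_mul_le_or_pow_mul_card_pow_four_le (R : Realization I F) (p : ℕ) [CharP F p]
    (hP : ∀ x ∈ P, t ≤ (L.filter (I x)).card) (ht : 2 ≤ t)
    (hp : p ≠ 0 → L.card ^ 3 ≤ p ^ 4) :
    P.card * t ≤ 8 * L.card ∨ t ^ 15 * P.card ^ 4 ≤ 2 ^ 88 * L.card ^ 11 := by
  obtain ⟨J, hJI, hJL, hdeg⟩ := exists_subrelation_card_filter_eq hP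
  exact (le_total _ _).imp_right fun hmt =>
    (R.mono hJI).pow_mul_card_pow_four_le p hJL hdeg ht hmt hp

end Realization

/-! ### Lines in the affine plane -/

/-- A line in the affine plane over `F`: the zero set of a polynomial of total degree 1. -/
def IsAffineLine {F : Type*} [Field F] (l : Set (Fin 2 → F)) : Prop :=
  ∃ f : MvPolynomial (Fin 2) F, f.totalDegree = 1 ∧ l = {x | eval x f = 0}

theorem exists_eq_of_totalDegree_eq_one {F : Type*} [Field F] {f : MvPolynomial (Fin 2) F}
    (hf : f.totalDegree = 1) :
    ∃ a b c, (a ≠ 0 ∨ b ≠ 0) ∧ f = C a * X 0 + C b * X 1 + C c := by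
  have hsupp : f.support ⊆ {Finsupp.single 0 1, Finsupp.single 1 1, 0} := by
    intro m hm
    have hdeg := le_totalDegree hm
    rw [hf, Finsupp.sum_fintype _ _ fun _ => rfl, Fin.sum_univ_two] at hdeg
    have hm_eq : m = Finsupp.single 0 (m 0) + Finsupp.single 1 (m 1) := by
      ext i
      fin_cases i <;> simp
    rw [hm_eq]
    obtain ⟨h₀, h₁⟩ | ⟨h₀, h₁⟩ | ⟨h₀, h₁⟩ :
        m 0 = 0 ∧ m 1 = 0 ∨ m 0 = 1 ∧ m 1 = 0 ∨ m 0 = 0 ∧ m 1 = 1 := by lia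
    all_goals simp [h₀, h₁]
  have hf_eq : f = C (f.coeff (Finsupp.single 0 1)) * X 0 + C (f.coeff (Finsupp.single 1 1)) * X 1 +
      C (f.coeff 0) := by
    conv_lhs => rw [f.as_sum, Finset.sum_subset hsupp fun m _ hm => by
      rw [notMem_support_iff.1 hm, monomial_zero]]
    rw [Finset.sum_insert, Finset.sum_insert, Finset.sum_singleton]
    · simp only [C_mul_X_eq_monomial, ← add_assoc]
      rfl
    · simp
    · simp [Finsupp.single_left_inj]
  refine ⟨_, _, _, ?_, hf_eq⟩
  by_contra! hzero
  rw [hzero.1, hzero.2] at hf_eq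
  rw [hf_eq] at hf
  simp at hf

theorem IsAffineLine.exists_equation {F : Type*} [Field F] {l : Set (Fin 2 → F)}
    (hl : IsAffineLine l) :
    ∃ a b c, (a ≠ 0 ∨ b ≠ 0) ∧ ∀ x, x ∈ l ↔ c + a * x 0 + b * x 1 = 0 := by
  obtain ⟨f, hf, rfl⟩ := hl
  obtain ⟨a, b, c, hab, rfl⟩ := exists_eq_of_totalDegree_eq_one hf
  refine ⟨a, b, c, hab, fun x => ?_⟩
  rw [Set.mem_ofPred_eq]
  simp only [map_add, map_mul, eval_C, eval_X]
  rw [add_comm _ c, add_assoc]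

theorem nonempty_realization_isAffineLine (F : Type*) [Field F] :
    Nonempty (Realization (fun (x : Fin 2 → F) (l : {l // IsAffineLine l}) => x ∈ l.1) F) := by
  choose a b c hab hmem using fun l : {l : Set (Fin 2 → F) // IsAffineLine l} =>
    l.2.exists_equation
  refine ⟨{
    pt x := (x 0, x 1)
    s := c
    A := a
    B := b
    pt_injective x y hxy := ?_
    equation x l hx := (hmem l x).1 hx
    eq_of_proportional l l' hsA hsB hAB := Subtype.ext (Set.ext fun x => ?_) }⟩
  · obtain ⟨h₀, h₁⟩ := Prod.mk.inj hxy
    exact funext (Fin.forall_fin_two.2 ⟨h₀, h₁⟩)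
  · rw [hmem, hmem]
    constructor <;> intro h
    · rcases hab l with hl | hl <;> apply mul_left_cancel₀ hl
      · linear_combination a l' * h - hsA + x 1 * hAB
      · linear_combination b l' * h - hsB - x 0 * hAB
    · rcases hab l' with hl | hl <;> apply mul_left_cancel₀ hl
      · linear_combination a l * h + hsA - x 1 * hAB
      · linear_combination b l * h + hsB + x 0 * hAB

theorem card_mul_le_or_of_isAffineLine {F : Type*} [Field F] (p : ℕ) [CharP F p]
    {L : Finset (Set (Fin 2 → F))} (hL : ∀ l ∈ L, IsAffineLine l) (hp : p ≠ 0 → L.card ^ 3 ≤ p ^ 4)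
    {t : ℕ} (ht : 2 ≤ t) {P : Finset (Fin 2 → F)}
    (hP : ∀ x ∈ P, t ≤ (L.filter fun l => x ∈ l).card) :
    P.card * t ≤ 8 * L.card ∨ t ^ 15 * P.card ^ 4 ≤ 2 ^ 88 * L.card ^ 11 := by
  obtain ⟨R⟩ := nonempty_realization_isAffineLine F
  lift L to Finset {l : Set (Fin 2 → F) // IsAffineLine l} using hL
  rw [Finset.card_image_of_injective _ Subtype.val_injective] at hp ⊢
  refine R.card_mul_le_or_pow_mul_card_pow_four_le p (fun x hx => ?_) ht hp
  have hrich := hP x hx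
  rwa [Finset.filter_image, Finset.card_image_of_injective _ Subtype.val_injective] at hrich

/-! ### Passage to real exponents -/

theorem le_mul_rpow_div_rpow_add {m n t : ℕ} (ht : 0 < t)
    (h : m * t ≤ 8 * n ∨ t ^ 15 * m ^ 4 ≤ 2 ^ 88 * n ^ 11) :
    (m : ℝ) ≤ 2 ^ 22 * ((n : ℝ) ^ ((11 : ℝ) / 4) / (t : ℝ) ^ ((15 : ℝ) / 4) + (n : ℝ) / t) := by
  have ht₀ : (0 : ℝ) < t := Nat.cast_pos.2 ht
  rw [mul_add]
  obtain h | h := h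
  · refine le_add_of_nonneg_of_le (by positivity) ?_
    rw [← mul_div_assoc, le_div_iff₀ ht₀]
    have : (m * t : ℝ) ≤ 8 * n := by exact_mod_cast h
    linarith [(Nat.cast_nonneg n : (0 : ℝ) ≤ n)]
  · refine le_add_of_le_of_nonneg ?_ (by positivity)
    have rpow_div_four_pow (k q : ℕ) : ((k : ℝ) ^ ((q : ℝ) / 4)) ^ 4 = (k : ℝ) ^ q := by
      rw [← Real.rpow_mul_natCast k.cast_nonneg, ← Real.rpow_natCast]
      norm_num
    have hn₄ := rpow_div_four_pow n 11
    have ht₄ := rpow_div_four_pow t 15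
    rw [Nat.cast_ofNat] at hn₄ ht₄
    rw [← mul_div_assoc, le_div_iff₀ (by positivity)]
    refine le_of_pow_le_pow_left₀ four_ne_zero (by positivity) ?_
    rw [mul_pow, mul_pow, hn₄, ht₄, mul_comm, ← pow_mul]
    exact_mod_cast h

theorem pow_three_le_pow_four_of_le_rpow {n p : ℕ} (h : (n : ℝ) ≤ (p : ℝ) ^ ((4 : ℝ) / 3)) :
    n ^ 3 ≤ p ^ 4 := by
  have h₃ := pow_le_pow_left₀ n.cast_nonneg h 3
  rw [← Real.rpow_mul_natCast p.cast_nonneg, Nat.cast_ofNat, div_mul_cancel₀ _ three_ne_zero,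
    Real.rpow_ofNat] at h₃
  exact_mod_cast h₃

theorem finite_and_ncard_le {α : Type*} {s : Set α} {b : ℝ}
    (h : ∀ P : Finset α, ↑P ⊆ s → (P.card : ℝ) ≤ b) : s.Finite ∧ (s.ncard : ℝ) ≤ b := by
  have hfin : s.Finite := by
    by_contra hs
    obtain ⟨P, hP, hcard⟩ := Set.Infinite.exists_subset_card_eq hs (⌊b⌋₊ + 1)
    have hle := h P hP
    rw [hcard] at hle
    exact (Nat.lt_floor_add_one b).not_ge (by exact_mod_cast hle)
  refine ⟨hfin, ?_⟩
  rw [Set.ncard_eq_toFinset_card s hfin]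
  exact h _ hfin.coe_toFinset.subset

end RichPoints

theorem rich_points_bound_general :
    ∃ c : ℝ, 0 < c ∧ ∀ (F : Type*) [Field F] (p : ℕ) [CharP F p] (L : Finset (Set (Fin 2 → F))),
      (∀ l ∈ L, RichPoints.IsAffineLine l) →
        (p ≠ 0 → (L.card : ℝ) ≤ (p : ℝ) ^ ((4 : ℝ) / 3)) →
        ∀ t : ℕ, 2 ≤ t →
          {x | t ≤ (L.filter fun l => x ∈ l).card}.Finite ∧
          ({x | t ≤ (L.filter fun l => x ∈ l).card}.ncard : ℝ) ≤
            c * ((L.card : ℝ) ^ ((11 : ℝ) / 4) / (t : ℝ) ^ ((15 : ℝ) / 4)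
              + (L.card : ℝ) / (t : ℝ)) := by
  refine ⟨2 ^ 22, by norm_num, fun F _ p _ L hL hp t ht =>
    RichPoints.finite_and_ncard_le fun P hP => ?_⟩
  have hp_pow : p ≠ 0 → L.card ^ 3 ≤ p ^ 4 := fun hp₀ =>
    RichPoints.pow_three_le_pow_four_of_le_rpow (hp hp₀)
  exact RichPoints.le_mul_rpow_div_rpow_add (by lia)
    (RichPoints.card_mul_le_or_of_isAffineLine p hL hp_pow ht fun x hx => hP hx)

theorem rich_points_bound :
    ∃ c : ℝ, 0 < c ∧ ∀ p : ℕ, p.Prime →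
      ∀ L : Finset (Set (Fin 2 → ZMod p)), (∀ l ∈ L, IsLine l) →
        (L.card : ℝ) ≤ (p : ℝ) ^ ((15 : ℝ) / 13) →
        ∀ t : ℕ, 2 ≤ t →
          (({x : Fin 2 → ZMod p | t ≤ (L.filter fun l => x ∈ l).card}.ncard : ℝ)) ≤
            c * ((L.card : ℝ) ^ ((11 : ℝ) / 4) / (t : ℝ) ^ ((15 : ℝ) / 4)
              + (L.card : ℝ) / (t : ℝ)) := by
  obtain ⟨c, hc, h⟩ := rich_points_bound_general
  refine ⟨c, hc, fun p hp L hL hn t ht => ?_⟩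
  have : Fact p.Prime := ⟨hp⟩
  have hp_one : (1 : ℝ) ≤ p := by exact_mod_cast hp.one_le
  exact (h (ZMod p) p L hL (fun _ => hn.trans <|
    Real.rpow_le_rpow_of_exponent_le hp_one (by norm_num)) t ht).2
end
end
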